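/- arXiv:1806.00279 — 2 statements merged into one kernel-verified Lean document; each statement's English description precedes it below -/
import Mathlib

section
/- Let q ≥ 3 and k ≥ 5. Every independent set Y of the q-Kneser graph qK_{2k:k} that is not contained in a dictator nor in the dual of a dictator satisfies |Y| < (1 + 3/q)·[k choose 1]_q·[2k−2 choose k−2]_q. -/
/-- The Gaussian binomial coefficient `[n choose k]_q`. -/
def gaussBinom (q n k : ℕ) : ℚ :=
  ∏ i ∈ Finset.range k, ((q : ℚ) ^ (n - i) - 1) / ((q : ℚ) ^ (i + 1) - 1)

set_option linter.unusedSectionVars false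

namespace WHM

open Finset Module
open scoped Classical

/-- The `q`-number `[d]_q`, as a real number. -/
noncomputable def qn (q d : ℕ) : ℝ := ((q : ℝ) ^ d - 1) / ((q : ℝ) - 1)

/-- The number of `m`-spaces of an `N`-space, defined recursively. -/
noncomputable def gb (q : ℕ) : ℕ → ℕ → ℝ
  | _, 0 => 1
  | N, m + 1 => qn q N / qn q (m + 1) * gb q (N - 1) m

/-- The finite set of `d`-dimensional subspaces. -/
noncomputable def gr (F V : Type) [Field F] [AddCommGroup V] [Module F V] [Finite V] (d : ℕ) :
    Finset (Submodule F V) :=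
  (Set.toFinite {W : Submodule F V | finrank F W = d}).toFinset

section counts

variable {F V : Type} [Field F] [Fintype F] [AddCommGroup V] [Module F V] [Finite V]

@[simp] lemma mem_gr {d : ℕ} {W : Submodule F V} : W ∈ gr F V d ↔ finrank F W = d := by
  simp [gr]

lemma qn_pos {q d : ℕ} (hq : 2 ≤ q) (hd : 1 ≤ d) : 0 < qn q d := by
  have hq' : (1 : ℝ) < q := by exact_mod_cast hq
  have : (1 : ℝ) < (q : ℝ) ^ d := one_lt_pow₀ hq' (by omega)
  exact div_pos (by linarith) (by linarith)

lemma qn_zero {q : ℕ} : qn q 0 = 0 := by simp [qn]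

lemma qn_one {q : ℕ} (hq : 2 ≤ q) : qn q 1 = 1 := by
  have hq' : (1 : ℝ) < q := by exact_mod_cast hq
  have : (q : ℝ) - 1 ≠ 0 := by linarith
  simp [qn, this]

lemma qn_succ {q d : ℕ} (hq : 2 ≤ q) : qn q (d + 1) = q * qn q d + 1 := by
  have hq' : (1 : ℝ) < q := by exact_mod_cast hq
  have : (q : ℝ) - 1 ≠ 0 := by linarith
  unfold qn
  field_simp
  ring

lemma qn_succ' {q d : ℕ} (hq : 2 ≤ q) : qn q (d + 1) = qn q d + (q : ℝ) ^ d := by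
  have hq' : (1 : ℝ) < q := by exact_mod_cast hq
  have : (q : ℝ) - 1 ≠ 0 := by linarith
  unfold qn
  field_simp
  ring

lemma qn_nonneg {q d : ℕ} (hq : 2 ≤ q) : 0 ≤ qn q d := by
  rcases Nat.eq_zero_or_pos d with rfl | h
  · rw [qn_zero]
  · exact (qn_pos hq h).le

lemma qn_two {q : ℕ} (hq : 2 ≤ q) : qn q 2 = q + 1 := by
  rw [qn_succ hq, qn_one hq]; ring

lemma gb_nonneg {q : ℕ} (hq : 2 ≤ q) (m : ℕ) : ∀ N, 0 ≤ gb q N m := by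
  induction m with
  | zero => intro N; simp [gb]
  | succ m ih =>
    intro N
    exact mul_nonneg (div_nonneg (qn_nonneg hq) (qn_nonneg hq)) (ih _)

lemma card_submodule {q : ℕ} (hF : Fintype.card F = q) [Fintype V] (D : Submodule F V) :
    (univ.filter (fun v : V => v ∈ D)).card = q ^ finrank F D := by
  have h := Module.card_eq_pow_finrank (K := F) (V := D)
  rw [hF] at h
  rw [← h, Fintype.card_subtype]

lemma card_between_mul {q : ℕ} (hF : Fintype.card F = q) {D E : Submodule F V} (hDE : D ≤ E) :
    (((gr F V (finrank F D + 1)).filter (fun D' => D ≤ D' ∧ D' ≤ E)).card : ℝ)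
      * ((q : ℝ) ^ (finrank F D + 1) - (q : ℝ) ^ (finrank F D))
      = (q : ℝ) ^ (finrank F E) - (q : ℝ) ^ (finrank F D) := by
  have : Fintype V := Fintype.ofFinite V
  have hdiff : ∀ A : Submodule F V, D ≤ A →
      ((univ.filter (fun v : V => v ∈ A ∧ v ∉ D)).card : ℝ)
        = (q : ℝ) ^ (finrank F A) - (q : ℝ) ^ (finrank F D) := by
    intro A hA
    have h1 := card_submodule hF A
    have h2 := card_submodule hF D
    have h3 : (univ.filter (fun v : V => v ∈ A ∧ v ∉ D)).card
        + (univ.filter (fun v : V => v ∈ D)).card = (univ.filter (fun v : V => v ∈ A)).card := by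
      rw [← card_union_of_disjoint]
      · congr 1
        ext v
        simp only [mem_union, mem_filter, mem_univ, true_and]
        constructor
        · rintro (h | h)
          · exact h.1
          · exact hA h
        · intro h
          by_cases hv : v ∈ D
          · exact Or.inr hv
          · exact Or.inl ⟨h, hv⟩
      · rw [Finset.disjoint_left]
        intro v hv hv'
        simp only [mem_filter, mem_univ, true_and] at hv hv'
        exact hv.2 hv'
    rw [h1, h2] at h3
    have h4 : ((univ.filter (fun v : V => v ∈ A ∧ v ∉ D)).card : ℝ) + (q : ℝ) ^ finrank F D
        = (q : ℝ) ^ finrank F A := by exact_mod_cast h3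
    linarith
  have key := Finset.card_eq_sum_card_fiberwise
    (f := fun v : V => D ⊔ Submodule.span F {v})
    (s := univ.filter (fun v : V => v ∈ E ∧ v ∉ D))
    (t := (gr F V (finrank F D + 1)).filter (fun D' => D ≤ D' ∧ D' ≤ E)) (by
      intro v hv
      simp only [coe_filter, mem_univ, true_and, Set.mem_ofPred_eq, mem_gr] at hv ⊢
      refine ⟨?_, le_sup_left, sup_le hDE ?_⟩
      · rw [Submodule.finrank_sup_span_singleton hv.2]
      · rw [Submodule.span_singleton_le_iff_mem]; exact hv.1)
  have key2 : ∀ D' ∈ (gr F V (finrank F D + 1)).filter (fun D' => D ≤ D' ∧ D' ≤ E),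
      (((univ.filter (fun v : V => v ∈ E ∧ v ∉ D)).filter
        (fun v => D ⊔ Submodule.span F {v} = D')).card : ℝ)
      = (q : ℝ) ^ (finrank F D + 1) - (q : ℝ) ^ (finrank F D) := by
    intro D' hD'
    simp only [mem_filter, mem_gr] at hD'
    obtain ⟨h1, h2, h3⟩ := hD'
    have := hdiff D' h2
    rw [h1] at this
    rw [← this]
    congr 2
    ext v
    simp only [mem_filter, mem_univ, true_and]
    constructor
    · rintro ⟨⟨ha, hb⟩, hc⟩
      refine ⟨?_, hb⟩
      rw [← hc]
      exact Submodule.mem_sup_right (Submodule.mem_span_singleton_self v)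
    · rintro ⟨ha, hb⟩
      refine ⟨⟨h3 ha, hb⟩, ?_⟩
      apply Submodule.eq_of_le_of_finrank_eq
      · exact sup_le h2 (by rw [Submodule.span_singleton_le_iff_mem]; exact ha)
      · rw [Submodule.finrank_sup_span_singleton hb, h1]
  have key' : ((univ.filter (fun v : V => v ∈ E ∧ v ∉ D)).card : ℝ)
      = ∑ D' ∈ (gr F V (finrank F D + 1)).filter (fun D' => D ≤ D' ∧ D' ≤ E),
        (((univ.filter (fun v : V => v ∈ E ∧ v ∉ D)).filter
        (fun v => D ⊔ Submodule.span F {v} = D')).card : ℝ) := by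
    exact_mod_cast key
  rw [sum_congr rfl key2, hdiff E hDE, sum_const, nsmul_eq_mul] at key'
  exact key'.symm

lemma card_between {q : ℕ} (hF : Fintype.card F = q) (hq : 2 ≤ q) {D E : Submodule F V}
    (hDE : D ≤ E) {d e : ℕ} (hd : finrank F D = d) (he : finrank F E = e) :
    (((gr F V (d + 1)).filter (fun D' => D ≤ D' ∧ D' ≤ E)).card : ℝ) = qn q (e - d) := by
  have h := card_between_mul hF hDE
  have hle : finrank F D ≤ finrank F E := Submodule.finrank_mono hDE
  rw [hd, he] at h hle
  have hq' : (1 : ℝ) < q := by exact_mod_cast hq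
  have h0 : (q : ℝ) - 1 ≠ 0 := by linarith
  have h1 : (q : ℝ) ^ d ≠ 0 := by positivity
  obtain ⟨m, rfl⟩ := Nat.exists_eq_add_of_le hle
  rw [Nat.add_sub_cancel_left]
  unfold qn
  rw [eq_div_iff h0]
  apply mul_right_cancel₀ h1
  rw [pow_add] at h
  linear_combination h

/-- points of a subspace -/
lemma card_points {q : ℕ} (hF : Fintype.card F = q) (hq : 2 ≤ q) {E : Submodule F V}
    {e : ℕ} (he : finrank F E = e) :
    (((gr F V 1).filter (fun P => P ≤ E)).card : ℝ) = qn q e := by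
  have h := card_between hF hq (bot_le : (⊥ : Submodule F V) ≤ E) (d := 0) (by simp) he
  simpa using h

lemma card_up {q : ℕ} (hF : Fintype.card F = q) (hq : 2 ≤ q) {n k : ℕ}
    (hn : finrank F V = n) (m : ℕ) : ∀ (D : Submodule F V) (d : ℕ), finrank F D = d → d + m = k →
    (((gr F V k).filter (fun R => D ≤ R)).card : ℝ) = gb q (n - d) m := by
  induction m with
  | zero =>
    intro D d hd hk
    have : (gr F V k).filter (fun R => D ≤ R) = {D} := by
      ext R
      simp only [mem_filter, mem_gr, mem_singleton]
      constructor
      · rintro ⟨h1, h2⟩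
        exact (Submodule.eq_of_le_of_finrank_eq h2 (by omega)).symm
      · rintro rfl
        exact ⟨by omega, le_rfl⟩
    rw [this]
    simp [gb]
  | succ m ih =>
    intro D d hd hk
    have hdc : ∑ R ∈ (gr F V k).filter (fun R => D ≤ R),
        (((gr F V (d + 1)).filter (fun D' => D ≤ D' ∧ D' ≤ R)).card : ℝ)
        = ∑ D' ∈ (gr F V (d + 1)).filter (fun D' => D ≤ D' ∧ D' ≤ ⊤),
          (((gr F V k).filter (fun R => D' ≤ R)).card : ℝ) := by
      simp only [card_eq_sum_ones, Nat.cast_sum, Nat.cast_one]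
      apply Finset.sum_comm'
      intro R D'
      simp only [mem_filter, mem_gr, le_top, and_true]
      constructor
      · rintro ⟨⟨a, b⟩, c, d, e⟩
        exact ⟨⟨a, e⟩, c, d⟩
      · rintro ⟨⟨a, e⟩, c, d⟩
        exact ⟨⟨a, d.trans e⟩, c, d, e⟩
    have h1 : ∀ R ∈ (gr F V k).filter (fun R => D ≤ R),
        (((gr F V (d + 1)).filter (fun D' => D ≤ D' ∧ D' ≤ R)).card : ℝ) = qn q (m + 1) := by
      intro R hR
      simp only [mem_filter, mem_gr] at hR
      rw [card_between hF hq hR.2 hd hR.1]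
      congr 1
      omega
    have h2 : ∀ D' ∈ (gr F V (d + 1)).filter (fun D' => D ≤ D' ∧ D' ≤ ⊤),
        (((gr F V k).filter (fun R => D' ≤ R)).card : ℝ) = gb q (n - d - 1) m := by
      intro D' hD'
      simp only [mem_filter, mem_gr] at hD'
      rw [ih D' (d + 1) hD'.1 (by omega)]
      congr 1
    rw [sum_congr rfl h1, sum_congr rfl h2, sum_const, sum_const, nsmul_eq_mul, nsmul_eq_mul,
      card_between hF hq le_top hd (by rw [finrank_top, hn])] at hdc
    have := qn_pos hq (show 1 ≤ m + 1 by omega)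
    simp only [gb]
    field_simp
    linarith

lemma card_up_zero {k : ℕ} {D : Submodule F V} (h : k < finrank F D) :
    (((gr F V k).filter (fun R => D ≤ R)).card : ℝ) = 0 := by
  have : (gr F V k).filter (fun R => D ≤ R) = ∅ := by
    ext R
    simp only [mem_filter, mem_gr, notMem_empty, iff_false, not_and]
    intro h1 h2
    have := Submodule.finrank_mono h2
    omega
  simp [this]

end counts

section moments

variable {F V : Type} [Field F] [Fintype F] [AddCommGroup V] [Module F V] [Finite V]

/-- points contained in `E` -/
noncomputable def pts (E : Submodule F V) : Finset (Submodule F V) :=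
  (gr F V 1).filter (fun P => P ≤ E)

/-- lines contained in `E` -/
noncomputable def lns (E : Submodule F V) : Finset (Submodule F V) :=
  (gr F V 2).filter (fun P => P ≤ E)

@[simp] lemma mem_pts {E P : Submodule F V} : P ∈ pts E ↔ finrank F P = 1 ∧ P ≤ E := by
  simp [pts]

@[simp] lemma mem_lns {E P : Submodule F V} : P ∈ lns E ↔ finrank F P = 2 ∧ P ≤ E := by
  simp [lns]

lemma pts_top : pts (⊤ : Submodule F V) = gr F V 1 := by ext; simp

lemma lns_top : lns (⊤ : Submodule F V) = gr F V 2 := by ext; simp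

lemma pts_filter {E L : Submodule F V} (h : L ≤ E) : (pts E).filter (fun P => P ≤ L) = pts L := by
  ext P
  simp only [mem_filter, mem_pts]
  constructor
  · rintro ⟨⟨a, b⟩, c⟩; exact ⟨a, c⟩
  · rintro ⟨a, c⟩; exact ⟨⟨a, c.trans h⟩, c⟩

lemma finrank_sup_points {P Q : Submodule F V} (hP : finrank F P = 1) (hQ : finrank F Q = 1)
    (h : P ≠ Q) : finrank F (P ⊔ Q : Submodule F V) = 2 := by
  have h1 := Submodule.finrank_sup_add_finrank_inf_eq P Q
  have h2 : finrank F (P ⊓ Q : Submodule F V) ≤ 1 := by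
    rw [← hP]; exact Submodule.finrank_mono inf_le_left
  have h3 : finrank F (P ⊓ Q : Submodule F V) ≠ 1 := by
    intro h3
    apply h
    have a := Submodule.eq_of_le_of_finrank_eq (inf_le_left : P ⊓ Q ≤ P) (by omega)
    have b := Submodule.eq_of_le_of_finrank_eq (inf_le_right : P ⊓ Q ≤ Q) (by omega)
    rw [← a, b]
  omega

lemma single_moment (T S : Finset (Submodule F V)) (a : ℝ)
    (h1 : ∀ t ∈ T, ((S.filter (fun R => t ≤ R)).card : ℝ) = a) (φ : Submodule F V → ℝ) :
    ∑ R ∈ S, ∑ t ∈ T.filter (fun t => t ≤ R), φ t = a * ∑ t ∈ T, φ t := by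
  have : ∑ R ∈ S, ∑ t ∈ T.filter (fun t => t ≤ R), φ t
      = ∑ t ∈ T, ∑ R ∈ S.filter (fun R => t ≤ R), φ t := by
    apply Finset.sum_comm'
    intro R t
    simp only [mem_filter]
    tauto
  rw [this, mul_sum]
  apply sum_congr rfl
  intro t ht
  rw [sum_const, nsmul_eq_mul, h1 t ht]

lemma sum_mul_swap (T S : Finset (Submodule F V)) (φ ψ : Submodule F V → ℝ) :
    ∑ R ∈ S, (∑ t ∈ T.filter (fun t => t ≤ R), φ t) * (∑ u ∈ T.filter (fun u => u ≤ R), ψ u)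
      = ∑ t ∈ T, ∑ u ∈ T, φ t * ψ u * ((S.filter (fun R => t ⊔ u ≤ R)).card : ℝ) := by
  have h : ∀ R ∈ S, (∑ t ∈ T.filter (fun t => t ≤ R), φ t)
      * (∑ u ∈ T.filter (fun u => u ≤ R), ψ u)
      = ∑ t ∈ T, ∑ u ∈ T, if t ⊔ u ≤ R then φ t * ψ u else 0 := by
    intro R _
    rw [sum_mul_sum, sum_filter]
    apply sum_congr rfl
    intro t _
    by_cases h : t ≤ R
    · simp only [h, if_true, sum_filter, sup_le_iff, true_and]
    · simp [h, sup_le_iff]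
  rw [sum_congr rfl h, sum_comm]
  apply sum_congr rfl
  intro t _
  rw [sum_comm]
  apply sum_congr rfl
  intro u _
  rw [← sum_filter, sum_const, nsmul_eq_mul, mul_comm]

lemma pair_moment (T S : Finset (Submodule F V)) (a b : ℝ)
    (h1 : ∀ t ∈ T, ((S.filter (fun R => t ≤ R)).card : ℝ) = a)
    (h2 : ∀ t ∈ T, ∀ u ∈ T, t ≠ u → ((S.filter (fun R => t ⊔ u ≤ R)).card : ℝ) = b)
    (φ ψ : Submodule F V → ℝ) :
    ∑ R ∈ S, (∑ t ∈ T.filter (fun t => t ≤ R), φ t) * (∑ u ∈ T.filter (fun u => u ≤ R), ψ u)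
      = b * ((∑ t ∈ T, φ t) * (∑ u ∈ T, ψ u)) + (a - b) * ∑ t ∈ T, φ t * ψ t := by
  rw [sum_mul_swap]
  have h : ∀ t ∈ T, ∑ u ∈ T, φ t * ψ u * ((S.filter (fun R => t ⊔ u ≤ R)).card : ℝ)
      = b * (φ t * ∑ u ∈ T, ψ u) + (a - b) * (φ t * ψ t) := by
    intro t ht
    have h' : ∀ u ∈ T, φ t * ψ u * ((S.filter (fun R => t ⊔ u ≤ R)).card : ℝ)
        = b * (φ t * ψ u) + if t = u then (a - b) * (φ t * ψ u) else 0 := by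
      intro u hu
      by_cases htu : t = u
      · subst htu
        simp only [sup_idem, if_true]
        rw [h1 t ht]; ring
      · rw [h2 t ht u hu htu]; simp only [htu, if_false]; ring
    rw [sum_congr rfl h', sum_add_distrib, sum_ite_eq, if_pos ht, ← mul_sum, ← mul_sum]
  rw [sum_congr rfl h, sum_add_distrib, ← mul_sum, ← mul_sum, sum_mul]

variable {q n : ℕ} (hF : Fintype.card F = q) (hq : 2 ≤ q) (hn : finrank F V = n)

include hF hq in
/-- number of lines of `E` through a point of `E` -/
lemma card_lines_through {E P : Submodule F V} {e : ℕ} (he : finrank F E = e)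
    (hP : P ∈ pts E) : (((lns E).filter (fun L => P ≤ L)).card : ℝ) = qn q (e - 1) := by
  rw [mem_pts] at hP
  rw [← card_between hF hq hP.2 hP.1 he]
  congr 2
  ext L
  simp only [mem_filter, mem_lns, mem_gr]
  tauto

lemma card_lines_through_two {E P Q : Submodule F V}
    (hP : P ∈ pts E) (hQ : Q ∈ pts E) (h : P ≠ Q) :
    (((lns E).filter (fun L => P ⊔ Q ≤ L)).card : ℝ) = 1 := by
  rw [mem_pts] at hP hQ
  have h2 := finrank_sup_points hP.1 hQ.1 h
  have : (lns E).filter (fun L => P ⊔ Q ≤ L) = {P ⊔ Q} := by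
    ext L
    simp only [mem_filter, mem_lns, mem_singleton]
    constructor
    · rintro ⟨⟨a, b⟩, c⟩
      exact (Submodule.eq_of_le_of_finrank_eq c (by omega)).symm
    · rintro rfl
      exact ⟨⟨h2, sup_le hP.2 hQ.2⟩, le_rfl⟩
  rw [this]
  simp

include hF hq in
lemma lines_single {E : Submodule F V} {e : ℕ} (he : finrank F E = e) (φ : Submodule F V → ℝ) :
    ∑ L ∈ lns E, ∑ P ∈ pts L, φ P = qn q (e - 1) * ∑ P ∈ pts E, φ P := by
  rw [← single_moment (pts E) (lns E) (qn q (e - 1))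
    (fun t ht => card_lines_through hF hq he ht) φ]
  apply sum_congr rfl
  intro L hL
  rw [mem_lns] at hL
  rw [pts_filter hL.2]

include hF hq in
lemma lines_pair {E : Submodule F V} {e : ℕ} (he : finrank F E = e) (φ ψ : Submodule F V → ℝ) :
    ∑ L ∈ lns E, (∑ P ∈ pts L, φ P) * (∑ P ∈ pts L, ψ P)
      = (∑ P ∈ pts E, φ P) * (∑ P ∈ pts E, ψ P)
        + (qn q (e - 1) - 1) * ∑ P ∈ pts E, φ P * ψ P := by
  have := pair_moment (pts E) (lns E) (qn q (e - 1)) 1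
    (fun t ht => card_lines_through hF hq he ht)
    (fun t ht u hu htu => card_lines_through_two ht hu htu) φ ψ
  rw [one_mul] at this
  rw [← this]
  apply sum_congr rfl
  intro L hL
  rw [mem_lns] at hL
  rw [pts_filter hL.2]

lemma gb_hyper (hq : 2 ≤ q) (m : ℕ) : gb q (m + 1) m = qn q (m + 1) := by
  induction m with
  | zero => simp [gb, qn_one hq]
  | succ m ih =>
    simp only [gb, Nat.add_sub_cancel]
    rw [ih]
    have := qn_pos hq (show 1 ≤ m + 1 by omega)
    field_simp

include hF hq hn in
lemma card_hyper {D : Submodule F V} {d : ℕ} (hd : finrank F D = d) (hdn : d + 1 ≤ n) :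
    (((gr F V (n - 1)).filter (fun H => D ≤ H)).card : ℝ) = qn q (n - d) := by
  rw [card_up hF hq hn (n - 1 - d) D d hd (by omega)]
  obtain ⟨m, rfl⟩ := Nat.exists_eq_add_of_le hdn
  have e1 : d + 1 + m - d = m + 1 := by omega
  have e2 : d + 1 + m - 1 - d = m := by omega
  rw [e1, e2, gb_hyper hq]

include hF hq hn in
lemma hyper_pair (hn2 : 3 ≤ n) (φ : Submodule F V → ℝ) (h0 : ∑ P ∈ gr F V 1, φ P = 0) :
    ∑ H ∈ gr F V (n - 1), (∑ P ∈ pts H, φ P) ^ 2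
      = (q : ℝ) ^ (n - 2) * ∑ P ∈ gr F V 1, φ P ^ 2 := by
  have := pair_moment (gr F V 1) (gr F V (n - 1)) (qn q (n - 1)) (qn q (n - 2))
    (fun t ht => card_hyper hF hq hn (mem_gr.1 ht) (by omega))
    (fun t ht u hu htu => card_hyper hF hq hn
      (finrank_sup_points (mem_gr.1 ht) (mem_gr.1 hu) htu) (by omega)) φ φ
  rw [h0] at this
  have e : qn q (n - 1) - qn q (n - 2) = (q : ℝ) ^ (n - 2) := by
    obtain ⟨m, rfl⟩ := Nat.exists_eq_add_of_le hn2
    have e1 : 3 + m - 1 = (m + 1) + 1 := by omega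
    have e2 : 3 + m - 2 = (m + 1) := by omega
    rw [e1, e2, qn_succ' hq]; ring
  rw [e] at this
  simp only [mul_zero, zero_add] at this
  simp only [sq]
  exact this

lemma sum_cube_swap (T S : Finset (Submodule F V)) (φ : Submodule F V → ℝ) :
    ∑ R ∈ S, (∑ t ∈ T.filter (fun t => t ≤ R), φ t) ^ 3
      = ∑ t ∈ T, ∑ u ∈ T, ∑ v ∈ T,
        φ t * φ u * φ v * ((S.filter (fun R => t ⊔ u ⊔ v ≤ R)).card : ℝ) := by
  have h : ∀ R ∈ S, (∑ t ∈ T.filter (fun t => t ≤ R), φ t) ^ 3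
      = ∑ t ∈ T, ∑ u ∈ T, ∑ v ∈ T, if t ⊔ u ⊔ v ≤ R then φ t * φ u * φ v else 0 := by
    intro R _
    have e : ∀ t u v : Submodule F V, (if t ⊔ u ⊔ v ≤ R then φ t * φ u * φ v else 0)
      = (if t ≤ R then φ t else 0) * (if u ≤ R then φ u else 0) * (if v ≤ R then φ v else 0) := by
      intro t u v
      by_cases h1 : t ≤ R <;> by_cases h2 : u ≤ R <;> by_cases h3 : v ≤ R <;>
        simp [h1, h2, h3, sup_le_iff]
    simp only [e, ← mul_sum, ← sum_mul, ← sum_filter]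
    ring
  rw [sum_congr rfl h, sum_comm]
  apply sum_congr rfl
  intro t _
  rw [sum_comm]
  apply sum_congr rfl
  intro u _
  rw [sum_comm]
  apply sum_congr rfl
  intro v _
  rw [← sum_filter, sum_const, nsmul_eq_mul, mul_comm]

include hF hq hn in
lemma third_moment (hn3 : 4 ≤ n) (φ : Submodule F V → ℝ) (h0 : ∑ P ∈ gr F V 1, φ P = 0) :
    ∑ H ∈ gr F V (n - 1), (∑ P ∈ pts H, φ P) ^ 3
      = (q : ℝ) ^ (n - 3) * ∑ L ∈ gr F V 2, (∑ P ∈ pts L, φ P) ^ 3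
        + ((q : ℝ) ^ (n - 2) + (q : ℝ) ^ (n - 3) - (q : ℝ) ^ (n - 3) * qn q (n - 1))
          * ∑ P ∈ gr F V 1, φ P ^ 3 := by
  have hH := sum_cube_swap (gr F V 1) (gr F V (n - 1)) φ
  have hL := sum_cube_swap (gr F V 1) (gr F V 2) φ
  have hp : ∀ R : Submodule F V, (gr F V 1).filter (fun t => t ≤ R) = pts R := fun R => rfl
  simp only [hp] at hH hL
  rw [hH, hL]
  have e1 : qn q (n - 1) = qn q (n - 3) + (q : ℝ) ^ (n - 3) + (q : ℝ) ^ (n - 2) := by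
    obtain ⟨m, rfl⟩ := Nat.exists_eq_add_of_le hn3
    have e1 : 4 + m - 1 = ((m + 1) + 1) + 1 := by omega
    have e2 : 4 + m - 2 = (m + 1) + 1 := by omega
    have e3 : 4 + m - 3 = (m + 1) := by omega
    rw [e1, e2, e3, qn_succ' hq, qn_succ' hq]
  have e2 : qn q (n - 2) = qn q (n - 3) + (q : ℝ) ^ (n - 3) := by
    obtain ⟨m, rfl⟩ := Nat.exists_eq_add_of_le hn3
    have e2 : 4 + m - 2 = (m + 1) + 1 := by omega
    have e3 : 4 + m - 3 = (m + 1) := by omega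
    rw [e2, e3, qn_succ' hq]
  set A : ℝ := (q : ℝ) ^ (n - 3) with hA
  set B : ℝ := (q : ℝ) ^ (n - 2) + (q : ℝ) ^ (n - 3) - (q : ℝ) ^ (n - 3) * qn q (n - 1) with hB
  have key : ∀ t ∈ gr F V 1, ∀ u ∈ gr F V 1, ∀ v ∈ gr F V 1,
      (((gr F V (n - 1)).filter (fun R => t ⊔ u ⊔ v ≤ R)).card : ℝ)
      = qn q (n - 3) + A * (((gr F V 2).filter (fun R => t ⊔ u ⊔ v ≤ R)).card : ℝ)
        + if t = u ∧ t = v then B else 0 := by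
    intro t ht u hu v hv
    rw [mem_gr] at ht hu hv
    by_cases h1 : t = u ∧ t = v
    · obtain ⟨rfl, rfl⟩ := h1
      simp only [sup_idem, and_self, if_true]
      rw [card_hyper hF hq hn ht (by omega), card_up hF hq hn 1 t 1 ht rfl]
      simp only [gb, zero_add, qn_one hq, div_one, mul_one]
      rw [hB, e1]; ring
    · rw [if_neg h1, add_zero]
      have hs : finrank F (t ⊔ u ⊔ v : Submodule F V) ≤ 3 := by
        have a := Submodule.finrank_add_le_finrank_add_finrank (t ⊔ u) v
        have b := Submodule.finrank_add_le_finrank_add_finrank t u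
        omega
      have hs2 : 2 ≤ finrank F (t ⊔ u ⊔ v : Submodule F V) := by
        by_cases h2 : t = u
        · have h3 : t ≠ v := fun h => h1 ⟨h2, h⟩
          rw [← finrank_sup_points ht hv h3]
          exact Submodule.finrank_mono (sup_le_sup_right le_sup_left v)
        · rw [← finrank_sup_points ht hu h2]
          exact Submodule.finrank_mono le_sup_left
      rcases (show finrank F (t ⊔ u ⊔ v : Submodule F V) = 2 ∨
        finrank F (t ⊔ u ⊔ v : Submodule F V) = 3 by omega) with h | h
      · rw [card_hyper hF hq hn h (by omega), card_up hF hq hn 0 _ 2 h rfl]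
        simp only [gb]
        rw [e2]; ring
      · rw [card_hyper hF hq hn h (by omega), card_up_zero (by omega)]
        ring
  have step : ∀ t ∈ gr F V 1, ∑ u ∈ gr F V 1, ∑ v ∈ gr F V 1, φ t * φ u * φ v *
        (((gr F V (n - 1)).filter (fun R => t ⊔ u ⊔ v ≤ R)).card : ℝ)
      = A * (∑ u ∈ gr F V 1, ∑ v ∈ gr F V 1, φ t * φ u * φ v *
        (((gr F V 2).filter (fun R => t ⊔ u ⊔ v ≤ R)).card : ℝ)) + B * φ t ^ 3 := by
    intro t ht
    have : ∀ u ∈ gr F V 1, ∑ v ∈ gr F V 1, φ t * φ u * φ v *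
        (((gr F V (n - 1)).filter (fun R => t ⊔ u ⊔ v ≤ R)).card : ℝ)
      = A * (∑ v ∈ gr F V 1, φ t * φ u * φ v *
        (((gr F V 2).filter (fun R => t ⊔ u ⊔ v ≤ R)).card : ℝ))
        + if t = u then B * φ t ^ 3 else 0 := by
      intro u hu
      have h3 : ∀ v ∈ gr F V 1, φ t * φ u * φ v *
        (((gr F V (n - 1)).filter (fun R => t ⊔ u ⊔ v ≤ R)).card : ℝ)
        = qn q (n - 3) * (φ t * φ u) * φ v + A * (φ t * φ u * φ v *
        (((gr F V 2).filter (fun R => t ⊔ u ⊔ v ≤ R)).card : ℝ))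
        + if t = v then (if t = u then B * φ t ^ 3 else 0) else 0 := by
        intro v hv
        rw [key t ht u hu v hv]
        by_cases h1 : t = u
        · by_cases h2 : t = v
          · subst h1; subst h2; simp only [and_self, if_true]; ring
          · simp only [h1, true_and]
            rw [if_neg (by rw [← h1]; exact h2), if_neg (by rw [← h1]; exact h2)]; ring
        · simp only [h1, false_and, if_false, ite_self]; ring
      rw [sum_congr rfl h3, sum_add_distrib, sum_add_distrib, ← mul_sum, h0, ← mul_sum,
        sum_ite_eq, if_pos ht]
      ring
    rw [sum_congr rfl this, sum_add_distrib, ← mul_sum, sum_ite_eq, if_pos ht]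
  rw [sum_congr rfl step, sum_add_distrib, ← mul_sum, ← mul_sum]

include hF hq hn in
/-- second moment of a function on lines all of whose point sums vanish -/
lemma line_moment {k : ℕ} (hk4 : 4 ≤ k) (G : Submodule F V → ℝ)
    (hG : ∀ P ∈ gr F V 1, ∑ L ∈ (gr F V 2).filter (fun L => P ≤ L), G L = 0) :
    ∑ R ∈ gr F V k, (∑ L ∈ lns R, G L) ^ 2
      = (gb q (n - 2) (k - 2) - gb q (n - 3) (k - 3)
          - q * (gb q (n - 3) (k - 3) - gb q (n - 4) (k - 4))) * ∑ L ∈ gr F V 2, G L ^ 2 := by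
  have hM := sum_mul_swap (gr F V 2) (gr F V k) G G
  have hp : ∀ R : Submodule F V, (gr F V 2).filter (fun t => t ≤ R) = lns R := fun R => rfl
  simp only [hp, ← sq] at hM
  rw [hM]
  set c2 := gb q (n - 2) (k - 2)
  set c3 := gb q (n - 3) (k - 3)
  set c4 := gb q (n - 4) (k - 4)
  have hz : ∑ t ∈ gr F V 2, ∑ u ∈ gr F V 2, G t * G u *
      (((gr F V 1).filter (fun P => P ≤ t ⊓ u)).card : ℝ) = 0 := by
    have : ∑ P ∈ gr F V 1, (∑ L ∈ (gr F V 2).filter (fun L => P ≤ L), G L) ^ 2 = 0 :=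
      sum_eq_zero (fun P hP => by rw [hG P hP]; ring)
    rw [← this]
    have h : ∀ P ∈ gr F V 1, (∑ L ∈ (gr F V 2).filter (fun L => P ≤ L), G L) ^ 2
        = ∑ t ∈ gr F V 2, ∑ u ∈ gr F V 2, if P ≤ t ⊓ u then G t * G u else 0 := by
      intro P _
      rw [sq, sum_mul_sum, sum_filter]
      apply sum_congr rfl
      intro t _
      by_cases h : P ≤ t
      · simp only [h, if_true, sum_filter, le_inf_iff, true_and]
      · simp [h, le_inf_iff]
    rw [sum_congr rfl h]
    symm
    rw [sum_comm]
    apply sum_congr rfl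
    intro t _
    rw [sum_comm]
    apply sum_congr rfl
    intro u _
    rw [← sum_filter, sum_const, nsmul_eq_mul, mul_comm]
  have hz0 : ∑ L ∈ gr F V 2, G L = 0 := by
    have h1 := sum_eq_zero hG
    have h2 : ∑ P ∈ gr F V 1, ∑ L ∈ (gr F V 2).filter (fun L => P ≤ L), G L
        = ∑ L ∈ gr F V 2, ∑ P ∈ pts L, G L := by
      apply Finset.sum_comm'
      intro P L
      simp only [mem_filter, mem_gr, mem_pts]
      tauto
    rw [h2] at h1
    have h3 : ∀ L ∈ gr F V 2, ∑ P ∈ pts L, G L = ((q : ℝ) + 1) * G L := by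
      intro L hL
      rw [sum_const, nsmul_eq_mul]
      unfold pts
      rw [card_points hF hq (mem_gr.1 hL), qn_two hq]
    rw [sum_congr rfl h3, ← mul_sum] at h1
    have : (0 : ℝ) < (q : ℝ) + 1 := by positivity
    exact (mul_eq_zero.1 h1).resolve_left this.ne'
  have key : ∀ t ∈ gr F V 2, ∀ u ∈ gr F V 2,
      (((gr F V k).filter (fun R => t ⊔ u ≤ R)).card : ℝ)
      = c4 + (c3 - c4) * (((gr F V 1).filter (fun P => P ≤ t ⊓ u)).card : ℝ)
        + if t = u then (c2 - c3 - q * (c3 - c4)) else 0 := by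
    intro t ht u hu
    rw [mem_gr] at ht hu
    have hsum := Submodule.finrank_sup_add_finrank_inf_eq t u
    have hle : finrank F (t ⊓ u : Submodule F V) ≤ 2 := by
      rw [← ht]; exact Submodule.finrank_mono inf_le_left
    by_cases htu : t = u
    · subst htu
      simp only [sup_idem, inf_idem, if_true]
      rw [card_up hF hq hn (k - 2) t 2 ht (by omega), card_points hF hq ht, qn_two hq]
      ring
    · rw [if_neg htu, add_zero]
      have hne : finrank F (t ⊓ u : Submodule F V) ≠ 2 := by
        intro h3
        apply htu
        have a := Submodule.eq_of_le_of_finrank_eq (inf_le_left : t ⊓ u ≤ t) (by omega)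
        have b := Submodule.eq_of_le_of_finrank_eq (inf_le_right : t ⊓ u ≤ u) (by omega)
        rw [← a, b]
      rcases (show finrank F (t ⊓ u : Submodule F V) = 0 ∨
        finrank F (t ⊓ u : Submodule F V) = 1 by omega) with h | h
      · rw [card_up hF hq hn (k - 4) _ 4 (by omega) (by omega), card_points hF hq h, qn_zero]
        ring
      · rw [card_up hF hq hn (k - 3) _ 3 (by omega) (by omega), card_points hF hq h, qn_one hq]
        ring
  have step : ∀ t ∈ gr F V 2, ∑ u ∈ gr F V 2, G t * G u *
        (((gr F V k).filter (fun R => t ⊔ u ≤ R)).card : ℝ)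
      = (c3 - c4) * (∑ u ∈ gr F V 2, G t * G u *
          (((gr F V 1).filter (fun P => P ≤ t ⊓ u)).card : ℝ))
        + (c2 - c3 - q * (c3 - c4)) * G t ^ 2 := by
    intro t ht
    have h3 : ∀ u ∈ gr F V 2, G t * G u *
        (((gr F V k).filter (fun R => t ⊔ u ≤ R)).card : ℝ)
        = c4 * G t * G u + (c3 - c4) * (G t * G u *
          (((gr F V 1).filter (fun P => P ≤ t ⊓ u)).card : ℝ))
        + if t = u then (c2 - c3 - q * (c3 - c4)) * G t ^ 2 else 0 := by
      intro u hu
      rw [key t ht u hu]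
      by_cases h : t = u
      · subst h; simp only [if_true]; ring
      · simp only [h, if_false]; ring
    rw [sum_congr rfl h3, sum_add_distrib, sum_add_distrib, ← mul_sum, hz0, ← mul_sum,
      sum_ite_eq, if_pos ht]
    ring
  rw [sum_congr rfl step, sum_add_distrib, ← mul_sum, ← mul_sum, hz]
  ring

end moments

section family

variable {F V : Type} [Field F] [Fintype F] [AddCommGroup V] [Module F V] [Finite V]

/-- number of members of `Y` through `P` -/
noncomputable def dg (Y : Finset (Submodule F V)) (P : Submodule F V) : ℝ :=
  ((Y.filter (fun R => P ≤ R)).card : ℝ)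

/-- number of members of `Y` inside `H` -/
noncomputable def hg (Y : Finset (Submodule F V)) (H : Submodule F V) : ℝ :=
  ((Y.filter (fun R => R ≤ H)).card : ℝ)

lemma dg_nonneg (Y : Finset (Submodule F V)) (P : Submodule F V) : 0 ≤ dg Y P := by
  unfold dg; positivity

lemma hg_nonneg (Y : Finset (Submodule F V)) (P : Submodule F V) : 0 ≤ hg Y P := by
  unfold hg; positivity

lemma sum_phi_dg (Y T : Finset (Submodule F V)) (φ : Submodule F V → ℝ) :
    ∑ P ∈ T, φ P * dg Y P = ∑ R ∈ Y, ∑ P ∈ T.filter (fun P => P ≤ R), φ P := by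
  have : ∑ R ∈ Y, ∑ P ∈ T.filter (fun P => P ≤ R), φ P
      = ∑ P ∈ T, ∑ R ∈ Y.filter (fun R => P ≤ R), φ P := by
    apply Finset.sum_comm'
    intro R t
    simp only [mem_filter]
    tauto
  rw [this]
  apply sum_congr rfl
  intro P _
  rw [sum_const, nsmul_eq_mul, dg, mul_comm]

lemma star_sum {P E : Submodule F V} (hP : P ∈ pts E)
    (h : Submodule F V → Submodule F V → ℝ) :
    ∑ l ∈ (lns E).filter (fun l => P ≤ l), ∑ Q ∈ (pts l).filter (fun Q => Q ≠ P), h l Q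
      = ∑ Q ∈ (pts E).filter (fun Q => Q ≠ P), h (P ⊔ Q) Q := by
  have h1 : ∑ l ∈ (lns E).filter (fun l => P ≤ l), ∑ Q ∈ (pts l).filter (fun Q => Q ≠ P), h l Q
      = ∑ Q ∈ (pts E).filter (fun Q => Q ≠ P), ∑ l ∈ ({P ⊔ Q} : Finset (Submodule F V)), h l Q := by
    rw [mem_pts] at hP
    apply Finset.sum_comm'
    intro l Q
    simp only [mem_filter, mem_pts, mem_lns, mem_singleton]
    constructor
    · rintro ⟨⟨⟨a, b⟩, c⟩, ⟨d, e⟩, f⟩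
      refine ⟨?_, ⟨d, e.trans b⟩, f⟩
      have := finrank_sup_points hP.1 d (Ne.symm f)
      exact (Submodule.eq_of_le_of_finrank_eq (sup_le c e) (by omega)).symm
    · rintro ⟨rfl, ⟨a, b⟩, c⟩
      have := finrank_sup_points hP.1 a (Ne.symm c)
      exact ⟨⟨⟨this, sup_le hP.2 b⟩, le_sup_left⟩, ⟨a, le_sup_right⟩, c⟩
  rw [h1]
  simp only [sum_singleton]

variable {q n k : ℕ} (hF : Fintype.card F = q) (hq : 2 ≤ q) (hn : finrank F V = n)

include hF hq in
lemma star_sum_const {P E : Submodule F V} (hP : P ∈ pts E) (g : Submodule F V → ℝ) :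
    ∑ Q ∈ (pts E).filter (fun Q => Q ≠ P), g (P ⊔ Q)
      = q * ∑ l ∈ (lns E).filter (fun l => P ≤ l), g l := by
  rw [← star_sum hP (fun l _ => g l), mul_sum]
  apply sum_congr rfl
  intro l hl
  simp only [mem_filter, mem_lns] at hl
  rw [sum_const, nsmul_eq_mul]
  congr 1
  have h1 : (pts l).filter (fun Q => Q ≠ P) = (pts l).erase P := by
    ext Q; simp only [mem_filter, mem_erase]; tauto
  have hPl : P ∈ pts l := by rw [mem_pts] at hP ⊢; exact ⟨hP.1, hl.2⟩
  rw [h1, cast_card_erase_of_mem hPl]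
  unfold pts
  rw [card_points hF hq hl.1.1, qn_two hq]
  ring

include hF hq in
/-- every member sees all members of an intersecting family -/
lemma sum_dg_ge (Y : Finset (Submodule F V)) (R : Submodule F V)
    (hR : ∀ S ∈ Y, R ⊓ S ≠ ⊥) : (Y.card : ℝ) ≤ ∑ P ∈ pts R, dg Y P := by
  have h := sum_phi_dg Y (pts R) (fun _ => 1)
  simp only [one_mul] at h
  rw [h, card_eq_sum_ones, Nat.cast_sum]
  apply sum_le_sum
  intro S hS
  have hpos : 1 ≤ finrank F (R ⊓ S : Submodule F V) := by
    have : finrank F (R ⊓ S : Submodule F V) ≠ 0 := by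
      intro h0
      exact hR S hS (Submodule.finrank_eq_zero.1 h0)
    omega
  have e : (pts R).filter (fun P => P ≤ S) = (gr F V 1).filter (fun P => P ≤ R ⊓ S) := by
    ext P; simp only [mem_filter, mem_pts, mem_gr, le_inf_iff]; tauto
  rw [e, sum_const, nsmul_eq_mul, card_points hF hq rfl]
  have : finrank F (R ⊓ S : Submodule F V) = (finrank F (R ⊓ S : Submodule F V) - 1) + 1 := by omega
  rw [this, qn_succ hq]
  have := qn_nonneg (d := finrank F (R ⊓ S : Submodule F V) - 1) hq
  have : (0 : ℝ) ≤ q := by positivity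
  push_cast
  nlinarith

include hF hq in
lemma sum_dg_eq (Y : Finset (Submodule F V)) (hdim : ∀ R ∈ Y, finrank F R = k) :
    ∑ P ∈ gr F V 1, dg Y P = qn q k * Y.card := by
  have h := sum_phi_dg Y (gr F V 1) (fun _ => 1)
  simp only [one_mul] at h
  rw [h]
  have : ∀ R ∈ Y, ∑ P ∈ (gr F V 1).filter (fun P => P ≤ R), (1 : ℝ) = qn q k := by
    intro R hR
    rw [sum_const, nsmul_eq_mul, card_points hF hq (hdim R hR), mul_one]
  rw [sum_congr rfl this, sum_const, nsmul_eq_mul, mul_comm]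

include hF hq hn in
lemma heavy (hn2 : n = 2 * k) (hk : 3 ≤ k) (Y : Finset (Submodule F V))
    (hdim : ∀ R ∈ Y, finrank F R = k) (hint : ∀ R ∈ Y, ∀ S ∈ Y, R ⊓ S ≠ ⊥)
    (P : Submodule F V) (hP : finrank F P = 1)
    (hκ : qn q k * qn q (k - 1) / qn q (2 * k - 1) ≤ 1) :
    dg Y P * (Y.card - dg Y P) * (1 - qn q k * qn q (k - 1) / qn q (2 * k - 1)) ^ 2
      ≤ q * gb q (2 * k - 1) (k - 1) * gb q (2 * k - 2) (k - 2) := by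
  set Y' := Y.filter (fun R => ¬ P ≤ R) with hY'
  have hcard : (Y'.card : ℝ) = Y.card - dg Y P := by
    have := card_filter_add_card_filter_not (s := Y) (fun R => P ≤ R)
    unfold dg
    rw [← this]; push_cast; ring
  rw [← hcard]
  set y := (Y'.card : ℝ) with hy
  have hy0 : 0 ≤ y := by rw [hy]; positivity
  have hPt : P ∈ pts (⊤ : Submodule F V) := by simp [hP]
  set Ls := (gr F V 2).filter (fun l => P ≤ l) with hLs
  have hLs' : (lns (⊤ : Submodule F V)).filter (fun l => P ≤ l) = Ls := by rw [lns_top]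
  have hdP : dg Y' P = 0 := by
    unfold dg
    rw [hY', filter_filter]
    simp
  have hLsCard : (Ls.card : ℝ) = qn q (2 * k - 1) := by
    rw [← hLs', card_lines_through hF hq (e := n) (by rw [finrank_top, hn]) hPt, hn2]
  have hr : 0 < qn q (2 * k - 1) := qn_pos hq (by omega)
  set m : Submodule F V → ℝ := fun l => ∑ Q ∈ pts l, dg Y' Q with hm
  have hmne : ∀ E : Submodule F V, ∑ Q ∈ (pts E).filter (fun Q => Q ≠ P), dg Y' Q
      = ∑ Q ∈ pts E, dg Y' Q := by
    intro E
    rw [sum_filter]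
    apply sum_congr rfl
    intro Q _
    by_cases h : Q = P
    · simp [h, hdP]
    · simp [h]
  have hmsum : ∀ E : Submodule F V, P ∈ pts E →
      ∑ l ∈ (lns E).filter (fun l => P ≤ l), m l = ∑ Q ∈ pts E, dg Y' Q := by
    intro E hE
    have := star_sum hE (fun _ Q => dg Y' Q)
    simp only [hmne] at this
    exact this
  have hdim' : ∀ R ∈ Y', finrank F R = k := fun R hR => hdim R (mem_filter.1 hR).1
  set mb : ℝ := qn q k * y / qn q (2 * k - 1) with hmb
  set mt : Submodule F V → ℝ := fun l => m l - mb with hmt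
  have hmt0 : ∑ l ∈ Ls, mt l = 0 := by
    rw [hmt, sum_sub_distrib, sum_const, nsmul_eq_mul, hLsCard, ← hLs', hmsum _ hPt, pts_top,
      sum_dg_eq hF hq Y' hdim', hmb]
    field_simp
    ring
  set W : ℝ := ∑ l ∈ Ls, mt l ^ 2 with hW
  have hW0 : 0 ≤ W := sum_nonneg (fun _ _ => sq_nonneg _)
  set c1 := gb q (2 * k - 1) (k - 1)
  set c2 := gb q (2 * k - 2) (k - 2)
  set c3 := gb q (2 * k - 3) (k - 3)
  have hc1 : 0 ≤ c1 := gb_nonneg hq _ _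
  have hc2 : 0 ≤ c2 := gb_nonneg hq _ _
  have hc3 : 0 ≤ c3 := gb_nonneg hq _ _
  have hq0 : (0 : ℝ) ≤ q := by positivity
  -- Claim B
  have hB : ∑ R ∈ gr F V k, (∑ l ∈ Ls.filter (fun l => l ≤ R), mt l) ^ 2 = (c2 - c3) * W := by
    have := pair_moment Ls (gr F V k) c2 c3
      (fun t ht => by
        have ht' := mem_filter.1 ht
        rw [card_up hF hq hn (k - 2) t 2 (mem_gr.1 ht'.1) (by omega), hn2])
      (fun t ht u hu htu => by
        have ht' := mem_filter.1 ht
        have hu' := mem_filter.1 hu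
        have ht2 := mem_gr.1 ht'.1
        have hu2 := mem_gr.1 hu'.1
        have h3 : finrank F (t ⊔ u : Submodule F V) = 3 := by
          have hsum := Submodule.finrank_sup_add_finrank_inf_eq t u
          have hle : finrank F (t ⊓ u : Submodule F V) ≤ 2 := by
            rw [← ht2]; exact Submodule.finrank_mono inf_le_left
          have hge : 1 ≤ finrank F (t ⊓ u : Submodule F V) := by
            rw [← hP]; exact Submodule.finrank_mono (le_inf ht'.2 hu'.2)
          have hne : finrank F (t ⊓ u : Submodule F V) ≠ 2 := by
            intro h3
            apply htu
            have a := Submodule.eq_of_le_of_finrank_eq (inf_le_left : t ⊓ u ≤ t) (by omega)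
            have b := Submodule.eq_of_le_of_finrank_eq (inf_le_right : t ⊓ u ≤ u) (by omega)
            rw [← a, b]
          omega
        rw [card_up hF hq hn (k - 3) _ 3 h3 (by omega), hn2]) mt mt
    rw [hmt0] at this
    simp only [mul_zero, zero_add] at this
    simp only [sq, hW]
    exact this
  set κ := qn q k * qn q (k - 1) / qn q (2 * k - 1) with hκd
  have hB2 : dg Y P * (y * (1 - κ)) ^ 2 ≤ (c2 - c3) * W := by
    rw [← hB]
    have hsub : Y.filter (fun R => P ≤ R) ⊆ gr F V k := by
      intro R hR
      rw [mem_gr]; exact hdim R (mem_filter.1 hR).1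
    refine le_trans ?_ (sum_le_sum_of_subset_of_nonneg hsub (fun _ _ _ => sq_nonneg _))
    unfold dg
    rw [← nsmul_eq_mul, ← sum_const]
    apply sum_le_sum
    intro R hR
    have hR' := mem_filter.1 hR
    have hPR : P ∈ pts R := by rw [mem_pts]; exact ⟨hP, hR'.2⟩
    have e : Ls.filter (fun l => l ≤ R) = (lns R).filter (fun l => P ≤ l) := by
      ext l; simp only [hLs, mem_filter, mem_gr, mem_lns]; tauto
    have e2 : ∑ l ∈ Ls.filter (fun l => l ≤ R), mt l
        = ∑ Q ∈ pts R, dg Y' Q - qn q (k - 1) * mb := by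
      rw [e, hmt, sum_sub_distrib, sum_const, nsmul_eq_mul,
        card_lines_through hF hq (hdim R hR'.1) hPR, hmsum R hPR]
    have h3 : y ≤ ∑ Q ∈ pts R, dg Y' Q :=
      sum_dg_ge hF hq Y' R (fun S hS => hint R hR'.1 S (mem_filter.1 hS).1)
    have e4 : qn q (k - 1) * mb = y * κ := by rw [hmb, hκd]; ring
    apply pow_le_pow_left₀ (mul_nonneg hy0 (by linarith))
    rw [e2, e4]; linarith
  -- Claim A
  have hA : W ^ 2 ≤ y * (q * (c1 - c2) * W) := by
    set φ : Submodule F V → ℝ := fun Q => if Q = P then 0 else mt (P ⊔ Q) with hφ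
    have hφs : ∀ g : ℝ → ℝ, g 0 = 0 →
        ∑ Q ∈ gr F V 1, g (φ Q) = q * ∑ l ∈ Ls, g (mt l) := by
      intro g hg
      rw [← hLs', ← star_sum_const hF hq hPt (fun l => g (mt l)), sum_filter, pts_top]
      apply sum_congr rfl
      intro Q _
      by_cases h : Q = P
      · simp [hφ, h, hg]
      · simp [hφ, h]
    have h1 : ∑ Q ∈ gr F V 1, φ Q = 0 := by
      have := hφs (fun x => x) rfl
      rw [hmt0] at this
      simpa using this
    have h2 : ∑ Q ∈ gr F V 1, φ Q * φ Q = q * W := by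
      have := hφs (fun x => x * x) (by simp)
      rw [hW]
      simp only [sq]
      exact this
    have h3 := pair_moment (gr F V 1) (gr F V k) c1 c2
      (fun t ht => by rw [card_up hF hq hn (k - 1) t 1 (mem_gr.1 ht) (by omega), hn2])
      (fun t ht u hu htu => by
        rw [card_up hF hq hn (k - 2) _ 2
          (finrank_sup_points (mem_gr.1 ht) (mem_gr.1 hu) htu) (by omega), hn2]) φ φ
    rw [h1, h2] at h3
    have h4 : W = ∑ R ∈ Y', ∑ Q ∈ (gr F V 1).filter (fun Q => Q ≤ R), φ Q := by
      rw [← sum_phi_dg]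
      have e1 : W = ∑ l ∈ Ls, mt l * m l := by
        have : ∀ l ∈ Ls, mt l ^ 2 = mt l * m l - mb * mt l := by
          intro l _
          simp only [hmt]; ring
        rw [hW, sum_congr rfl this, sum_sub_distrib, ← mul_sum, hmt0]
        ring
      have := star_sum hPt (fun l Q => mt l * dg Y' Q)
      simp only [← mul_sum, hmne] at this
      rw [e1, ← hLs', this, sum_filter, pts_top]
      apply sum_congr rfl
      intro Q _
      by_cases h : Q = P
      · simp [hφ, h]
      · simp [hφ, h]
    have h5 : W ^ 2 ≤ y * ∑ R ∈ Y', (∑ Q ∈ (gr F V 1).filter (fun Q => Q ≤ R), φ Q) ^ 2 := by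
      conv_lhs => rw [h4]
      exact sq_sum_le_card_mul_sum_sq
    refine h5.trans (mul_le_mul_of_nonneg_left ?_ hy0)
    have hsub : Y' ⊆ gr F V k := by
      intro R hR
      rw [mem_gr]; exact hdim' R hR
    refine (sum_le_sum_of_subset_of_nonneg hsub (fun _ _ _ => sq_nonneg _)).trans ?_
    simp only [sq]
    rw [h3]
    apply le_of_eq; ring
  have hA2 : W ≤ y * (q * c1) := by
    rcases eq_or_lt_of_le hW0 with h | h
    · rw [← h]; positivity
    · have h1 : W * W ≤ (y * (q * (c1 - c2))) * W := by nlinarith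
      have h2 := le_of_mul_le_mul_right h1 h
      have h3 : 0 ≤ y * q * c2 := by positivity
      nlinarith
  rcases eq_or_lt_of_le hy0 with h | h
  · rw [← h]; simp only [mul_zero, zero_mul]; positivity
  · have h1 : dg Y P * (y * (1 - κ)) ^ 2 ≤ c2 * (y * (q * c1)) := by
      have : (c2 - c3) * W ≤ c2 * W := by nlinarith
      have h5 := mul_le_mul_of_nonneg_left hA2 hc2
      linarith
    have h2 : (dg Y P * y * (1 - κ) ^ 2) * y ≤ (q * c1 * c2) * y := by nlinarith
    exact le_of_mul_le_mul_right h2 h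

include hF hq hn in
lemma deg_bound (hn2 : n = 2 * k) (hk : 3 ≤ k) (Y : Finset (Submodule F V))
    (hdim : ∀ R ∈ Y, finrank F R = k) (hint : ∀ R ∈ Y, ∀ S ∈ Y, R ⊓ S ≠ ⊥)
    (P : Submodule F V) (hP : finrank F P = 1) (hno : ∃ S ∈ Y, ¬ P ≤ S) :
    dg Y P ≤ qn q k * gb q (2 * k - 2) (k - 2) := by
  obtain ⟨S, hS, hPS⟩ := hno
  have hsub : Y.filter (fun R => P ≤ R)
      ⊆ (pts S).biUnion (fun Q => (gr F V k).filter (fun R => P ⊔ Q ≤ R)) := by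
    intro R hR
    have hR' := mem_filter.1 hR
    obtain ⟨v, hv, hv0⟩ := Submodule.exists_mem_ne_zero_of_ne_bot (hint R hR'.1 S hS)
    rw [mem_biUnion]
    refine ⟨Submodule.span F {v}, ?_, ?_⟩
    · rw [mem_pts, Submodule.span_singleton_le_iff_mem]
      exact ⟨finrank_span_singleton hv0, hv.2⟩
    · rw [mem_filter, mem_gr, sup_le_iff, Submodule.span_singleton_le_iff_mem]
      exact ⟨hdim R hR'.1, hR'.2, hv.1⟩
  have h1 := (card_le_card hsub).trans card_biUnion_le
  have h2 : dg Y P ≤ ∑ Q ∈ pts S, (((gr F V k).filter (fun R => P ⊔ Q ≤ R)).card : ℝ) := by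
    unfold dg; exact_mod_cast h1
  refine h2.trans (le_of_eq ?_)
  have h3 : ∀ Q ∈ pts S, (((gr F V k).filter (fun R => P ⊔ Q ≤ R)).card : ℝ)
      = gb q (2 * k - 2) (k - 2) := by
    intro Q hQ
    rw [mem_pts] at hQ
    have hne : P ≠ Q := by rintro rfl; exact hPS hQ.2
    rw [card_up hF hq hn (k - 2) _ 2 (finrank_sup_points hP hQ.1 hne) (by omega), hn2]
  rw [sum_congr rfl h3, sum_const, nsmul_eq_mul]
  unfold pts
  rw [card_points hF hq (hdim S hS)]

end family

section light

variable {F V : Type} [Field F] [Fintype F] [AddCommGroup V] [Module F V] [Finite V]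
variable {q n k : ℕ} (hF : Fintype.card F = q) (hq : 2 ≤ q) (hn : finrank F V = n)

/-- The off-diagonal quadratic form on a line. -/
noncomputable def Fl (f : Submodule F V → ℝ) (L : Submodule F V) : ℝ :=
  (∑ P ∈ pts L, f P) ^ 2 - ∑ P ∈ pts L, f P ^ 2

include hF hq in
lemma sum_Fl {E : Submodule F V} {e : ℕ} (he : finrank F E = e) (f : Submodule F V → ℝ) :
    ∑ L ∈ lns E, Fl f L = (∑ P ∈ pts E, f P) ^ 2 - ∑ P ∈ pts E, f P ^ 2 := by
  have h1 := lines_pair hF hq he f f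
  have h2 := lines_single hF hq he (fun P => f P ^ 2)
  unfold Fl
  rw [sum_sub_distrib, h2]
  simp only [sq] at h1 ⊢
  rw [h1]; ring

include hF hq in
lemma card_pts_real {E : Submodule F V} {e : ℕ} (he : finrank F E = e) :
    ((pts E).card : ℝ) = qn q e := by
  unfold pts
  exact card_points hF hq he

include hF hq in
lemma Fl_sq_le (f : Submodule F V → ℝ) (L : Submodule F V) (hL : finrank F L = 2) :
    Fl f L ^ 2 ≤ q * (q + 1) * Fl (fun P => f P ^ 2) L := by
  have key : ∀ g : Submodule F V → ℝ, Fl g L = ∑ x ∈ (pts L).offDiag, g x.1 * g x.2 := by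
    intro g
    unfold Fl
    have h1 : (∑ P ∈ pts L, g P) ^ 2 = ∑ x ∈ (pts L) ×ˢ (pts L), g x.1 * g x.2 := by
      rw [sq, sum_mul_sum, sum_product]
    have h2 : ∑ P ∈ pts L, g P ^ 2 = ∑ x ∈ (pts L).diag, g x.1 * g x.2 := by
      rw [sum_diag]; simp only [sq]
    rw [h1, h2, ← diag_union_offDiag, sum_union (disjoint_diag_offDiag _)]
    ring
  rw [key, key]
  have hc : (((pts L).offDiag).card : ℝ) = q * (q + 1) := by
    have h1 := card_pts_real hF hq hL
    rw [qn_two hq] at h1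
    rw [offDiag_card, Nat.cast_sub (Nat.le_mul_self _)]
    push_cast
    rw [h1]; ring
  have := sq_sum_le_card_mul_sum_sq (s := (pts L).offDiag) (f := fun x => f x.1 * f x.2)
  rw [hc] at this
  refine this.trans (le_of_eq ?_)
  congr 1
  apply sum_congr rfl
  intro x _
  ring

include hF hq hn in
lemma sum_Fl_sq_le (f : Submodule F V → ℝ) :
    ∑ L ∈ gr F V 2, Fl f L ^ 2 ≤ q * (q + 1) * (∑ P ∈ gr F V 1, f P ^ 2) ^ 2 := by
  have h1 : ∑ L ∈ gr F V 2, Fl f L ^ 2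
      ≤ ∑ L ∈ gr F V 2, q * (q + 1) * Fl (fun P => f P ^ 2) L :=
    sum_le_sum (fun L hL => Fl_sq_le hF hq f L (mem_gr.1 hL))
  refine h1.trans ?_
  rw [← mul_sum, ← lns_top, sum_Fl hF hq (e := n) (by rw [finrank_top, hn]), pts_top]
  apply mul_le_mul_of_nonneg_left _ (by positivity)
  have : 0 ≤ ∑ P ∈ gr F V 1, (f P ^ 2) ^ 2 := sum_nonneg (fun _ _ => sq_nonneg _)
  linarith

lemma line_swap (ψ φ : Submodule F V → ℝ) :
    ∑ L ∈ gr F V 2, ψ L * ∑ P ∈ pts L, φ P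
      = ∑ P ∈ gr F V 1, φ P * ∑ L ∈ (gr F V 2).filter (fun L => P ≤ L), ψ L := by
  simp only [mul_sum]
  have : ∑ L ∈ gr F V 2, ∑ P ∈ pts L, ψ L * φ P
      = ∑ P ∈ gr F V 1, ∑ L ∈ (gr F V 2).filter (fun L => P ≤ L), ψ L * φ P := by
    apply Finset.sum_comm'
    intro L P
    simp only [mem_gr, mem_pts, mem_filter]
    tauto
  rw [this]
  apply sum_congr rfl
  intro P _
  apply sum_congr rfl
  intro L _
  ring

include hF hq hn in
lemma star_pts {P : Submodule F V} (hP : finrank F P = 1) (φ : Submodule F V → ℝ) :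
    ∑ L ∈ (gr F V 2).filter (fun L => P ≤ L), ∑ Q ∈ pts L, φ Q
      = (qn q (n - 1) - 1) * φ P + ∑ Q ∈ gr F V 1, φ Q := by
  have hPt : P ∈ pts (⊤ : Submodule F V) := by simp [hP]
  have h := star_sum hPt (fun _ Q => φ Q)
  have e : ∀ E : Submodule F V, P ≤ E →
      ∑ Q ∈ (pts E).filter (fun Q => Q ≠ P), φ Q = ∑ Q ∈ pts E, φ Q - φ P := by
    intro E hE
    have h1 : (pts E).filter (fun Q => Q ≠ P) = (pts E).erase P := by
      ext Q; simp only [mem_filter, mem_erase]; tauto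
    have hPE : P ∈ pts E := by rw [mem_pts]; exact ⟨hP, hE⟩
    rw [h1, ← sum_erase_add _ _ hPE]; ring
  have h2 : ∑ l ∈ (lns (⊤ : Submodule F V)).filter (fun l => P ≤ l),
      ∑ Q ∈ (pts l).filter (fun Q => Q ≠ P), φ Q
      = ∑ l ∈ (lns (⊤ : Submodule F V)).filter (fun l => P ≤ l), (∑ Q ∈ pts l, φ Q - φ P) :=
    sum_congr rfl (fun l hl => e l (mem_filter.1 hl).2)
  rw [h2, e ⊤ le_top, sum_sub_distrib, sum_const, nsmul_eq_mul,
    card_lines_through hF hq (e := n) (by rw [finrank_top, hn]) hPt, lns_top, pts_top] at h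
  linarith

/-- Sum of a line function over the lines through a point. -/
noncomputable def sp (g : Submodule F V → ℝ) (P : Submodule F V) : ℝ :=
  ∑ L ∈ (gr F V 2).filter (fun L => P ≤ L), g L

include hF hq in
lemma sum_sp (g : Submodule F V → ℝ) :
    ∑ P ∈ gr F V 1, sp g P = (q + 1) * ∑ L ∈ gr F V 2, g L := by
  have h := line_swap g (fun _ => (1 : ℝ))
  simp only [one_mul] at h
  unfold sp
  rw [← h, mul_sum]
  apply sum_congr rfl
  intro L hL
  rw [sum_const, nsmul_eq_mul, card_pts_real hF hq (mem_gr.1 hL), qn_two hq]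
  ring

include hF hq hn in
/-- Projection of a line function away from the point functions. -/
lemma line_proj (hn3 : 3 ≤ n) (g g' : Submodule F V → ℝ) (a b : ℝ)
    (ha : a = 1 / (qn q (n - 1) - 1))
    (hb : b = - ((q + 1) * ∑ L ∈ gr F V 2, g L) / (qn q (n - 1) * (qn q (n - 1) - 1)))
    (hg' : ∀ L, g' L = g L - a * ∑ P ∈ pts L, sp g P - b) :
    (∀ P ∈ gr F V 1, ∑ L ∈ (gr F V 2).filter (fun L => P ≤ L), g' L = 0) ∧
    ∑ L ∈ gr F V 2, g' L ^ 2 ≤ ∑ L ∈ gr F V 2, g L ^ 2 := by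
  have hr : 1 < qn q (n - 1) := by
    obtain ⟨m, rfl⟩ := Nat.exists_eq_add_of_le hn3
    have e1 : 3 + m - 1 = (m + 1) + 1 := by omega
    rw [e1, qn_succ hq]
    have := qn_pos hq (show 1 ≤ m + 1 by omega)
    have hq' : (0 : ℝ) < q := by exact_mod_cast (by omega : 0 < q)
    nlinarith [mul_pos hq' this]
  set r := qn q (n - 1) with hrd
  have hr1 : r - 1 ≠ 0 := by linarith
  have hr0 : r ≠ 0 := by linarith
  have hz : ∀ P ∈ gr F V 1, ∑ L ∈ (gr F V 2).filter (fun L => P ≤ L), g' L = 0 := by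
    intro P hP
    have hP1 := mem_gr.1 hP
    have hPt : P ∈ pts (⊤ : Submodule F V) := by simp [hP1]
    have hc : (((gr F V 2).filter (fun L => P ≤ L)).card : ℝ) = r := by
      rw [← lns_top, card_lines_through hF hq (e := n) (by rw [finrank_top, hn]) hPt]
    simp only [hg', sum_sub_distrib, ← mul_sum, sum_const, nsmul_eq_mul]
    rw [star_pts hF hq hn hP1, sum_sp hF hq, hc, hb, ha]
    change sp g P - _ - _ = 0
    rw [← hrd]
    field_simp
    ring
  refine ⟨hz, ?_⟩
  have ho : ∀ φ : Submodule F V → ℝ, ∑ L ∈ gr F V 2, g' L * ∑ P ∈ pts L, φ P = 0 := by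
    intro φ
    rw [line_swap]
    apply sum_eq_zero
    intro P hP
    rw [hz P hP, mul_zero]
  have ht : ∑ L ∈ gr F V 2, g' L = 0 := by
    have h := sum_sp hF hq g'
    have : ∑ P ∈ gr F V 1, sp g' P = 0 := sum_eq_zero hz
    rw [this] at h
    have hq' : (0 : ℝ) < q + 1 := by positivity
    rcases mul_eq_zero.1 h.symm with h1 | h1
    · linarith
    · exact h1
  have hs : ∑ L ∈ gr F V 2, g' L * g L = ∑ L ∈ gr F V 2, g' L ^ 2 := by
    have : ∀ L ∈ gr F V 2, g' L * g L
        = g' L ^ 2 + a * (g' L * ∑ P ∈ pts L, sp g P) + b * g' L := by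
      intro L _
      have e : g L = g' L + a * ∑ P ∈ pts L, sp g P + b := by rw [hg']; ring
      rw [e]; ring
    rw [sum_congr rfl this, sum_add_distrib, sum_add_distrib, ← mul_sum, ← mul_sum, ho, ht]
    ring
  have hfin : 0 ≤ ∑ L ∈ gr F V 2, (g L - g' L) ^ 2 := sum_nonneg (fun _ _ => sq_nonneg _)
  have e : ∑ L ∈ gr F V 2, (g L - g' L) ^ 2
      = ∑ L ∈ gr F V 2, g L ^ 2 - 2 * ∑ L ∈ gr F V 2, g' L * g L + ∑ L ∈ gr F V 2, g' L ^ 2 := by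
    rw [mul_sum, ← sum_sub_distrib, ← sum_add_distrib]
    apply sum_congr rfl
    intro L _
    ring
  rw [e, hs] at hfin
  linarith

include hF hq hn in
lemma cubic_identity (hn3 : 4 ≤ n) (f : Submodule F V → ℝ) (h0 : ∑ P ∈ gr F V 1, f P = 0) :
    (q : ℝ) ^ (n - 3) * ∑ P ∈ gr F V 1, sp (Fl f) P * f P
      = ∑ H ∈ gr F V (n - 1), (∑ P ∈ pts H, f P) ^ 3
        - (q : ℝ) ^ (n - 2) * ∑ P ∈ gr F V 1, f P ^ 3 := by
  have h1 := third_moment hF hq hn hn3 f h0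
  have h2 := lines_pair hF hq (E := (⊤ : Submodule F V)) (e := n) (by rw [finrank_top, hn])
    (fun P => f P ^ 2) f
  have h3 := line_swap (Fl f) f
  rw [lns_top, pts_top, h0, mul_zero, zero_add] at h2
  have h4 : ∑ P ∈ gr F V 1, sp (Fl f) P * f P = ∑ L ∈ gr F V 2, Fl f L * ∑ P ∈ pts L, f P := by
    rw [h3]
    apply sum_congr rfl
    intro P _
    unfold sp; ring
  have h5 : ∑ L ∈ gr F V 2, Fl f L * ∑ P ∈ pts L, f P
      = ∑ L ∈ gr F V 2, (∑ P ∈ pts L, f P) ^ 3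
        - ∑ L ∈ gr F V 2, (∑ P ∈ pts L, f P ^ 2) * ∑ P ∈ pts L, f P := by
    rw [← sum_sub_distrib]
    apply sum_congr rfl
    intro L _
    unfold Fl; ring
  have h6 : ∑ P ∈ gr F V 1, f P ^ 2 * f P = ∑ P ∈ gr F V 1, f P ^ 3 :=
    sum_congr rfl (fun P _ => by ring)
  rw [h6] at h2
  rw [h4, h5, h2, h1]
  ring

include hF hq hn in
lemma hyper_sum (hn2 : n = 2 * k) (hk : 1 ≤ k) (Y : Finset (Submodule F V))
    (hdim : ∀ R ∈ Y, finrank F R = k) (H : Submodule F V) (hH : finrank F H = n - 1) :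
    ∑ P ∈ pts H, dg Y P = qn q (k - 1) * Y.card + (q : ℝ) ^ (k - 1) * hg Y H := by
  have h := sum_phi_dg Y (pts H) (fun _ => 1)
  simp only [one_mul] at h
  rw [h]
  have h1 : ∀ R ∈ Y, ∑ P ∈ (pts H).filter (fun P => P ≤ R), (1 : ℝ)
      = qn q (k - 1) + if R ≤ H then (q : ℝ) ^ (k - 1) else 0 := by
    intro R hR
    have e : (pts H).filter (fun P => P ≤ R) = (gr F V 1).filter (fun P => P ≤ R ⊓ H) := by
      ext P; simp only [mem_filter, mem_pts, mem_gr, le_inf_iff]; tauto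
    rw [e, sum_const, nsmul_eq_mul, mul_one]
    by_cases hRH : R ≤ H
    · rw [if_pos hRH, inf_eq_left.2 hRH, card_points hF hq (hdim R hR)]
      obtain ⟨m, rfl⟩ := Nat.exists_eq_add_of_le' hk
      rw [Nat.add_sub_cancel, qn_succ' hq]
    · rw [if_neg hRH, add_zero]
      have hs := Submodule.finrank_sup_add_finrank_inf_eq R H
      have hle : finrank F (R ⊔ H : Submodule F V) ≤ n := by
        rw [← hn]; exact Submodule.finrank_le _
      have hlt : finrank F H < finrank F (R ⊔ H : Submodule F V) := by
        apply Submodule.finrank_lt_finrank_of_lt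
        refine lt_of_le_of_ne le_sup_right ?_
        intro h
        exact hRH (by rw [h]; exact le_sup_left)
      have hd := hdim R hR
      rw [card_points hF hq (e := k - 1) (by omega)]
  rw [sum_congr rfl h1, sum_add_distrib, sum_const, nsmul_eq_mul, ← sum_filter, sum_const,
    nsmul_eq_mul]
  unfold hg
  ring

end light

section light2

variable {F V : Type} [Field F] [Fintype F] [AddCommGroup V] [Module F V] [Finite V]
variable {q n k : ℕ} (hF : Fintype.card F = q) (hq : 2 ≤ q) (hn : finrank F V = n)

lemma qn_mono (hq : 2 ≤ q) {a b : ℕ} (h : a ≤ b) : qn q a ≤ qn q b := by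
  have hq' : (1 : ℝ) < q := by exact_mod_cast hq
  unfold qn
  apply div_le_div_of_nonneg_right _ (by linarith)
  have := pow_le_pow_right₀ hq'.le h
  linarith

lemma gb_step_le (hq : 2 ≤ q) (N m : ℕ) (h : m + 1 ≤ N) : gb q (N - 1) m ≤ gb q N (m + 1) := by
  simp only [gb]
  have h1 := qn_pos hq (show 1 ≤ m + 1 by omega)
  have h2 := qn_mono hq h
  have h3 : 1 ≤ qn q N / qn q (m + 1) := by rw [le_div_iff₀ h1]; linarith
  have h4 := gb_nonneg hq m (N - 1)
  nlinarith

/-- facts about `q`-numbers at `2k` -/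
lemma qn_facts (hq : 2 ≤ q) (hk : 3 ≤ k) :
    qn q (2 * k) = qn q k * ((q : ℝ) ^ k + 1) ∧
    qn q (2 * k - 1) - 1 = q * (qn q (k - 1) * ((q : ℝ) ^ (k - 1) + 1)) ∧
    qn q (2 * k) = q * qn q (2 * k - 1) + 1 ∧
    qn q (k - 1) * qn q (2 * k) ≤ qn q k * qn q (2 * k - 1) := by
  have hq' : (1 : ℝ) < q := by exact_mod_cast hq
  have h0 : (q : ℝ) - 1 ≠ 0 := by linarith
  obtain ⟨m, rfl⟩ := Nat.exists_eq_add_of_le' (show 1 ≤ k by omega)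
  have e1 : 2 * (m + 1) - 1 = 2 * m + 1 := by omega
  rw [e1, Nat.add_sub_cancel]
  refine ⟨?_, ?_, ?_, ?_⟩
  · unfold qn; field_simp; ring
  · rw [qn_succ hq]; unfold qn; field_simp; ring
  · rw [← qn_succ hq]; rfl
  · unfold qn
    rw [div_mul_div_comm, div_mul_div_comm]
    apply div_le_div_of_nonneg_right _ (by nlinarith)
    have e2 : (q : ℝ) ^ (2 * (m + 1)) = q ^ m * q ^ m * q * q := by ring
    have e3 : (q : ℝ) ^ (2 * m + 1) = q ^ m * q ^ m * q := by ring
    have e4 : (q : ℝ) ^ (m + 1) = q ^ m * q := by ring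
    rw [e2, e3, e4]
    set x := (q : ℝ) ^ m
    have hx : 1 ≤ x := one_le_pow₀ hq'.le
    have : 0 ≤ (q - 1) * (x * (x * q - 1)) := by
      apply mul_nonneg (by linarith)
      apply mul_nonneg (by linarith)
      nlinarith
    nlinarith

set_option maxHeartbeats 2000000 in
set_option maxRecDepth 4000 in
include hF hq hn in
lemma light (hn2 : n = 2 * k) (hk : 4 ≤ k) (Y : Finset (Submodule F V))
    (hdim : ∀ R ∈ Y, finrank F R = k) (hint : ∀ R ∈ Y, ∀ S ∈ Y, R ⊓ S ≠ ⊥)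
    (hY : 0 < Y.card) (p h : ℝ)
    (hp : ∀ P ∈ gr F V 1, dg Y P ≤ p) (hh : ∀ H ∈ gr F V (n - 1), hg Y H ≤ h)
    (hp0 : 0 ≤ p) (hh0 : 0 ≤ h) :
    (1 - qn q k ^ 2 / qn q (2 * k)) * Y.card ≤ p + h + Y.card * qn q k / qn q (2 * k)
      + Real.sqrt (q * (q + 1) * gb q (2 * k - 2) (k - 2) * Y.card) := by
  set y : ℝ := (Y.card : ℝ) with hy
  have hy0 : 0 < y := by rw [hy]; exact_mod_cast hY
  have hq' : (1 : ℝ) < q := by exact_mod_cast hq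
  obtain ⟨A1, A2, A3, A4⟩ := qn_facts hq (show 3 ≤ k by omega)
  set N := qn q (2 * k) with hN
  set r := qn q (2 * k - 1) with hr
  set K := qn q k with hK
  set K1 := qn q (k - 1) with hK1
  set c2 := gb q (2 * k - 2) (k - 2) with hc2
  have hc20 : 0 ≤ c2 := gb_nonneg hq _ _
  have hNp : 0 < N := qn_pos hq (by omega)
  have hrp : 0 < r := qn_pos hq (by omega)
  have hKp : 0 < K := qn_pos hq (by omega)
  have hK1p : 0 < K1 := qn_pos hq (by omega)
  have hqk1 : 0 < (q : ℝ) ^ (k - 1) := by positivity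
  have hr1 : 0 < r - 1 := by rw [A2]; positivity
  set μ := y * K / N with hμ
  have hμ0 : 0 ≤ μ := by positivity
  set f : Submodule F V → ℝ := fun P => dg Y P - μ with hf
  have hcardN : ((gr F V 1).card : ℝ) = N := by
    rw [← pts_top, card_pts_real hF hq (e := n) (by rw [finrank_top, hn]), hn2]
  have hf0 : ∑ P ∈ gr F V 1, f P = 0 := by
    rw [hf, sum_sub_distrib, sum_dg_eq hF hq Y hdim, sum_const, nsmul_eq_mul, hcardN, hμ]
    field_simp
    ring
  set W := ∑ P ∈ gr F V 1, f P ^ 2 with hW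
  have hW0 : 0 ≤ W := sum_nonneg (fun _ _ => sq_nonneg _)
  have hdgf : ∀ P, dg Y P = f P + μ := fun P => by simp only [hf]; ring
  have hqcy : 0 ≤ (q : ℝ) * (q + 1) * c2 * y :=
    mul_nonneg (mul_nonneg (mul_nonneg (by linarith) (by linarith)) hc20) hy0.le
  -- step 1
  have hWd : W = ∑ P ∈ gr F V 1, f P * dg Y P := by
    simp only [hdgf, mul_add, sum_add_distrib, ← sum_mul, hf0, hW, sq]
    ring
  have hdd : y ^ 2 ≤ ∑ P ∈ gr F V 1, dg Y P * dg Y P := by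
    rw [sum_phi_dg]
    have : ∑ R ∈ Y, y ≤ ∑ R ∈ Y, ∑ P ∈ (gr F V 1).filter (fun P => P ≤ R), dg Y P :=
      sum_le_sum (fun R hR => sum_dg_ge hF hq Y R (hint R hR))
    rw [sum_const, nsmul_eq_mul] at this
    rw [sq]; exact this
  have hstep1 : (1 - K ^ 2 / N) * y * y ≤ W := by
    have e : ∑ P ∈ gr F V 1, dg Y P * dg Y P = W + μ * (K * y) := by
      rw [hWd, hy, ← sum_dg_eq hF hq Y hdim, mul_sum, ← sum_add_distrib]
      apply sum_congr rfl
      intro P _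
      simp only [hf]; ring
    have e2 : μ * (K * y) = K ^ 2 / N * y * y := by rw [hμ]; ring
    rw [e, e2] at hdd
    linarith
  -- step 2
  set X : Submodule F V → ℝ := fun R => ∑ P ∈ pts R, f P with hX
  have hstep2 : W ^ 2 ≤ y * ∑ R ∈ Y, X R ^ 2 := by
    have e : W = ∑ R ∈ Y, X R := by
      rw [hWd, sum_phi_dg]; rfl
    rw [e]
    exact sq_sum_le_card_mul_sum_sq
  -- step 3
  set g := Fl f with hg
  have hXsq : ∀ R ∈ Y, X R ^ 2 = ∑ P ∈ pts R, f P ^ 2 + ∑ L ∈ lns R, g L := by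
    intro R hR
    rw [hg, sum_Fl hF hq (hdim R hR)]; ring
  have hdiag : ∑ R ∈ Y, ∑ P ∈ pts R, f P ^ 2 ≤ p * W := by
    have e := sum_phi_dg Y (gr F V 1) (fun P => f P ^ 2)
    have e' : ∑ R ∈ Y, ∑ P ∈ pts R, f P ^ 2 = ∑ P ∈ gr F V 1, f P ^ 2 * dg Y P := e.symm
    rw [e', hW, mul_sum]
    apply sum_le_sum
    intro P hP
    have := mul_le_mul_of_nonneg_left (hp P hP) (sq_nonneg (f P))
    linarith
  -- step 4
  have hgtot : ∑ L ∈ gr F V 2, g L = - W := by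
    rw [hg, ← lns_top, sum_Fl hF hq (e := n) (by rw [finrank_top, hn]), pts_top, hf0, hW]
    ring
  have hspt : ∑ P ∈ gr F V 1, sp g P = - ((q + 1) * W) := by
    rw [sum_sp hF hq, hgtot]; ring
  have hrn : qn q (n - 1) = r := by rw [hn2]
  set a : ℝ := 1 / (r - 1) with ha
  set b : ℝ := (q + 1) * W / (r * (r - 1)) with hb
  set g' : Submodule F V → ℝ := fun L => g L - a * ∑ P ∈ pts L, sp g P - b with hg'
  obtain ⟨hz, hle⟩ := line_proj hF hq hn (by omega) g g' a b (by rw [hrn])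
    (by rw [hrn, hgtot, hb]; ring) (fun L => rfl)
  have hg'2 : ∑ L ∈ gr F V 2, g' L ^ 2 ≤ q * (q + 1) * W ^ 2 :=
    hle.trans (sum_Fl_sq_le hF hq hn f)
  -- step 5
  have hstep5 : ∑ R ∈ Y, ∑ L ∈ lns R, g' L ≤ Real.sqrt (q * (q + 1) * c2 * y) * W := by
    have h1 := line_moment hF hq hn hk g' hz
    have h2 : (∑ R ∈ Y, ∑ L ∈ lns R, g' L) ^ 2 ≤ y * ∑ R ∈ Y, (∑ L ∈ lns R, g' L) ^ 2 :=
      sq_sum_le_card_mul_sum_sq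
    have hsub : Y ⊆ gr F V k := fun R hR => mem_gr.2 (hdim R hR)
    have h3 : ∑ R ∈ Y, (∑ L ∈ lns R, g' L) ^ 2 ≤ ∑ R ∈ gr F V k, (∑ L ∈ lns R, g' L) ^ 2 :=
      sum_le_sum_of_subset_of_nonneg hsub (fun _ _ _ => sq_nonneg _)
    have hS0 : 0 ≤ ∑ L ∈ gr F V 2, g' L ^ 2 := sum_nonneg (fun _ _ => sq_nonneg _)
    have h4 : gb q (n - 2) (k - 2) - gb q (n - 3) (k - 3)
        - q * (gb q (n - 3) (k - 3) - gb q (n - 4) (k - 4)) ≤ c2 := by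
      have a1 : 0 ≤ gb q (n - 3) (k - 3) := gb_nonneg hq _ _
      have a2 := gb_step_le hq (n - 3) (k - 4) (by omega)
      rw [show n - 3 - 1 = n - 4 by omega, show k - 4 + 1 = k - 3 by omega] at a2
      have a3 : gb q (n - 2) (k - 2) = c2 := by rw [hc2, hn2]
      rw [a3]
      have a4 : 0 ≤ (q : ℝ) * (gb q (n - 3) (k - 3) - gb q (n - 4) (k - 4)) :=
        mul_nonneg (by linarith) (by linarith)
      linarith
    have h5 : ∑ R ∈ gr F V k, (∑ L ∈ lns R, g' L) ^ 2 ≤ c2 * (q * (q + 1) * W ^ 2) := by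
      rw [h1]
      exact (mul_le_mul_of_nonneg_right h4 hS0).trans (mul_le_mul_of_nonneg_left hg'2 hc20)
    have h6 : (∑ R ∈ Y, ∑ L ∈ lns R, g' L) ^ 2 ≤ (Real.sqrt (q * (q + 1) * c2 * y) * W) ^ 2 := by
      rw [mul_pow, Real.sq_sqrt hqcy]
      refine h2.trans ((mul_le_mul_of_nonneg_left (h3.trans h5) hy0.le).trans (le_of_eq ?_))
      ring
    exact (le_abs_self _).trans (abs_le_of_sq_le_sq h6 (mul_nonneg (Real.sqrt_nonneg _) hW0))
  -- step 6
  set Z := ∑ P ∈ gr F V 1, sp g P * f P with hZ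
  have hcorr : ∑ R ∈ Y, ∑ L ∈ lns R, g L
      = ∑ R ∈ Y, ∑ L ∈ lns R, g' L + a * K1 * (Z - μ * ((q + 1) * W)) + b * (y * (K * K1 / (q + 1))) := by
    have e1 : ∀ R ∈ Y, ∑ L ∈ lns R, g L = ∑ L ∈ lns R, g' L
        + a * K1 * ∑ P ∈ (gr F V 1).filter (fun P => P ≤ R), sp g P + b * (K * K1 / (q + 1)) := by
      intro R hR
      have hcl : ((lns R).card : ℝ) = K * K1 / (q + 1) := by
        have h1 := lines_single hF hq (hdim R hR) (fun _ => (1 : ℝ))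
        have h2 : ∀ L ∈ lns R, ∑ P ∈ pts L, (1 : ℝ) = q + 1 := by
          intro L hL
          rw [sum_const, nsmul_eq_mul, card_pts_real hF hq (mem_lns.1 hL).1, qn_two hq, mul_one]
        rw [sum_congr rfl h2, sum_const, nsmul_eq_mul, sum_const, nsmul_eq_mul,
          card_pts_real hF hq (hdim R hR), mul_one] at h1
        have : (0 : ℝ) < q + 1 := by positivity
        field_simp
        rw [h1, ← hK, ← hK1]; ring
      have h3 := lines_single hF hq (hdim R hR) (sp g)
      change _ = _ + a * K1 * ∑ P ∈ pts R, sp g P + _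
      simp only [hg', sum_sub_distrib, sum_const, nsmul_eq_mul, ← mul_sum]
      rw [hcl, h3, ← hK1]
      ring
    rw [sum_congr rfl e1, sum_add_distrib, sum_add_distrib, ← mul_sum, ← sum_phi_dg, sum_const,
      nsmul_eq_mul]
    have e2 : ∑ P ∈ gr F V 1, sp g P * dg Y P = Z - μ * ((q + 1) * W) := by
      simp only [hdgf, mul_add, sum_add_distrib, ← sum_mul, hspt, hZ]
      ring
    rw [e2]
    ring
  have hneg : b * (y * (K * K1 / (q + 1))) - a * K1 * (μ * ((q + 1) * W)) ≤ 0 := by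
    have e : b * (y * (K * K1 / (q + 1))) - a * K1 * (μ * ((q + 1) * W))
        = (y * K * K1 * W / (r - 1)) * (1 / r - (q + 1) / N) := by
      rw [hb, ha, hμ]
      have : (0 : ℝ) < q + 1 := by positivity
      field_simp
    rw [e]
    apply mul_nonpos_of_nonneg_of_nonpos
      (div_nonneg (mul_nonneg (mul_nonneg (mul_nonneg hy0.le hKp.le) hK1p.le) hW0) hr1.le)
    have : 1 / r ≤ (q + 1) / N := by
      rw [div_le_div_iff₀ hrp hNp, A3]
      have : 1 ≤ r := by linarith
      linarith
    linarith
  have hZle : Z ≤ (q : ℝ) ^ k * h * W + q * μ * W := by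
    have h1 := cubic_identity hF hq hn (by omega) f hf0
    have h2 := hyper_pair hF hq hn (by omega) f hf0
    have h3 : ∑ H ∈ gr F V (n - 1), (∑ P ∈ pts H, f P) ^ 3
        ≤ (q : ℝ) ^ (k - 1) * h * ((q : ℝ) ^ (n - 2) * W) := by
      rw [hW, ← h2, mul_sum]
      apply sum_le_sum
      intro H hH
      have hs : ∑ P ∈ pts H, f P ≤ (q : ℝ) ^ (k - 1) * h := by
        have hHd := mem_gr.1 hH
        rw [hf, sum_sub_distrib, hyper_sum hF hq hn hn2 (by omega) Y hdim H hHd, sum_const,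
          nsmul_eq_mul, card_pts_real hF hq hHd, hrn]
        have i1 := mul_le_mul_of_nonneg_left (hh H hH) hqk1.le
        have i2 : K1 * y ≤ r * μ := by
          rw [hμ]
          have : r * (y * K / N) = (K * r) * y / N := by ring
          rw [this, le_div_iff₀ hNp]
          have := mul_le_mul_of_nonneg_right A4 hy0.le
          linarith
        rw [← hK1]
        linarith
      have := mul_le_mul_of_nonneg_right hs (sq_nonneg (∑ P ∈ pts H, f P))
      calc (∑ P ∈ pts H, f P) ^ 3 = (∑ P ∈ pts H, f P) * (∑ P ∈ pts H, f P) ^ 2 := by ring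
        _ ≤ _ := this
    have h4 : - (μ * W) ≤ ∑ P ∈ gr F V 1, f P ^ 3 := by
      rw [hW, mul_sum, ← sum_neg_distrib]
      apply sum_le_sum
      intro P _
      have i1 : -μ ≤ f P := by simp only [hf]; have := dg_nonneg Y P; linarith
      have := mul_le_mul_of_nonneg_right i1 (sq_nonneg (f P))
      calc -(μ * f P ^ 2) = -μ * f P ^ 2 := by ring
        _ ≤ f P * f P ^ 2 := this
        _ = f P ^ 3 := by ring
    have e1 : (q : ℝ) ^ (n - 2) = q ^ (n - 3) * q := by
      rw [← pow_succ]; congr 1; omega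
    have e2 : (q : ℝ) ^ k = q ^ (k - 1) * q := by
      rw [← pow_succ]; congr 1; omega
    have hqp : 0 < (q : ℝ) ^ (n - 3) := by positivity
    have h5 := mul_le_mul_of_nonneg_left h4 (show 0 ≤ (q : ℝ) ^ (n - 2) by positivity)
    refine le_of_mul_le_mul_left ?_ hqp
    change (q : ℝ) ^ (n - 3) * Z = _ at h1
    rw [h1, e2]
    rw [e1] at h3 h5 ⊢
    linarith
  have haK : a * K1 * (q : ℝ) ^ k ≤ 1 := by
    have e2 : (q : ℝ) ^ k = q ^ (k - 1) * q := by
      rw [← pow_succ]; congr 1; omega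
    rw [ha, A2, e2]
    have : 1 / (q * (K1 * ((q : ℝ) ^ (k - 1) + 1))) * K1 * (q ^ (k - 1) * q)
        = q ^ (k - 1) / ((q : ℝ) ^ (k - 1) + 1) := by
      field_simp
    rw [this, div_le_one (by positivity)]
    linarith
  have haK0 : 0 ≤ a * K1 := by rw [ha]; positivity
  have haZ : a * K1 * Z ≤ h * W + μ * W := by
    have i1 := mul_le_mul_of_nonneg_left hZle haK0
    have hqk : (q : ℝ) ≤ q ^ k := le_self_pow₀ hq'.le (by omega)
    have i2 : a * K1 * q ≤ 1 := (mul_le_mul_of_nonneg_left hqk haK0).trans haK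
    have i3 := mul_le_mul_of_nonneg_right haK (mul_nonneg hh0 hW0)
    have i4 := mul_le_mul_of_nonneg_right i2 (mul_nonneg hμ0 hW0)
    nlinarith
  set T := Real.sqrt (q * (q + 1) * c2 * y) with hT
  have hT0 : 0 ≤ T := Real.sqrt_nonneg _
  have hXX : ∑ R ∈ Y, X R ^ 2 ≤ (p + h + μ + T) * W := by
    rw [sum_congr rfl hXsq, sum_add_distrib, hcorr]
    nlinarith
  have hfin : W ≤ y * (p + h + μ + T) := by
    rcases eq_or_lt_of_le hW0 with h' | h'
    · rw [← h']; exact mul_nonneg hy0.le (by linarith)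
    · have h1 : W * W ≤ (y * (p + h + μ + T)) * W := by
        have := mul_le_mul_of_nonneg_left hXX hy0.le
        nlinarith
      exact le_of_mul_le_mul_right h1 h'
  have : ((1 - K ^ 2 / N) * y) * y ≤ (p + h + μ + T) * y := by linarith
  exact le_of_mul_le_mul_right this hy0

end light2

section final

variable {F V : Type} [Field F] [Fintype F] [AddCommGroup V] [Module F V] [Finite V]
variable {q n k : ℕ} (hF : Fintype.card F = q) (hq3 : 3 ≤ q) (hn : finrank F V = n)

lemma num_facts (hq3 : 3 ≤ q) (hk : 5 ≤ k) :
    qn q (2 * k - 1) ≤ q * (qn q k * qn q (k - 1)) ∧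
    2 * (qn q k * qn q (k - 1)) ≤ qn q (2 * k - 1) ∧
    (q : ℝ) ^ 3 * (q + 1) ≤ qn q k ∧
    qn q k ^ 2 / qn q (2 * k) ≤ 1 / 2 ∧
    qn q k / qn q (2 * k) ≤ 1 / 244 := by
  have hq : 2 ≤ q := by omega
  have hq' : (3 : ℝ) ≤ q := by exact_mod_cast hq3
  have h0 : (0 : ℝ) < (q : ℝ) - 1 := by linarith
  obtain ⟨A1, -, -, -⟩ := qn_facts hq (show 3 ≤ k by omega)
  have hK : 0 < qn q k := qn_pos hq (by omega)
  have hKe : qn q k * (q - 1) = (q : ℝ) ^ k - 1 := by unfold qn; field_simp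
  have hpk : (243 : ℝ) ≤ (q : ℝ) ^ k := by
    have h1 : (3 : ℝ) ^ 5 ≤ (q : ℝ) ^ 5 := pow_le_pow_left₀ (by norm_num) hq' 5
    have h2 : (q : ℝ) ^ 5 ≤ q ^ k := pow_le_pow_right₀ (by linarith) hk
    norm_num at h1
    linarith
  have hx : (27 : ℝ) ≤ (q : ℝ) ^ (k - 1) := by
    have h1 : (3 : ℝ) ^ 3 ≤ (q : ℝ) ^ 3 := pow_le_pow_left₀ (by norm_num) hq' 3
    have h2 : (q : ℝ) ^ 3 ≤ q ^ (k - 1) := pow_le_pow_right₀ (by linarith) (by omega)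
    norm_num at h1
    linarith
  have hxq : (q : ℝ) ^ 2 ≤ (q : ℝ) ^ (k - 1) := pow_le_pow_right₀ (by linarith) (by omega)
  have e1 : (q : ℝ) ^ k = q * q ^ (k - 1) := by
    rw [← pow_succ']; congr 1; omega
  have e2 : (q : ℝ) ^ (2 * k - 1) = q * (q ^ (k - 1) * q ^ (k - 1)) := by
    rw [← pow_add, ← pow_succ']; congr 1; omega
  have hprod : qn q k * qn q (k - 1) = (q * q ^ (k - 1) - 1) * ((q : ℝ) ^ (k - 1) - 1) / (q - 1) / (q - 1) := by
    unfold qn; rw [e1]; field_simp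
  have hr : qn q (2 * k - 1) = (q * (q ^ (k - 1) * q ^ (k - 1)) - 1) / ((q : ℝ) - 1) := by
    unfold qn; rw [e2]
  refine ⟨?_, ?_, ?_, ?_, ?_⟩
  · rw [hr, hprod, ← mul_div_assoc, div_le_div_iff_of_pos_right h0, ← mul_div_assoc, le_div_iff₀ h0]
    set x := (q : ℝ) ^ (k - 1)
    have i1 : x * (q * q) ≤ x * x := by nlinarith
    nlinarith
  · rw [hr, hprod, ← mul_div_assoc, div_le_div_iff_of_pos_right h0, ← mul_div_assoc, div_le_iff₀ h0]
    set x := (q : ℝ) ^ (k - 1)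
    have i1 : (q * x - 1) * (x - 1) ≤ q * (x * x) - 1 := by nlinarith
    have i2 : 0 ≤ q * (x * x) - 1 := by nlinarith
    nlinarith
  · have h5 := qn_mono hq hk
    have : qn q 5 = (q : ℝ) ^ 4 + q ^ 3 + q ^ 2 + q + 1 := by
      unfold qn; field_simp; ring
    rw [this] at h5
    nlinarith [sq_nonneg (q : ℝ)]
  · rw [A1, sq, mul_div_mul_left _ _ hK.ne', div_le_div_iff₀ (by linarith) (by norm_num)]
    nlinarith
  · rw [A1]
    have : qn q k / (qn q k * ((q : ℝ) ^ k + 1)) = 1 / ((q : ℝ) ^ k + 1) := by field_simp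
    rw [this]
    apply one_div_le_one_div_of_le <;> linarith

include hF hq3 hn in
lemma point_light (hn2 : n = 2 * k) (hk : 5 ≤ k) (Y : Finset (Submodule F V))
    (hdim : ∀ R ∈ Y, finrank F R = k) (hint : ∀ R ∈ Y, ∀ S ∈ Y, R ⊓ S ≠ ⊥)
    (hbig : ((q : ℝ) + 3) * (qn q k * gb q (2 * k - 2) (k - 2)) ≤ q * Y.card)
    (P : Submodule F V) (hP : finrank F P = 1) (hno : ∃ S ∈ Y, ¬ P ≤ S) :
    dg Y P ≤ Y.card / 8 := by
  have hq : 2 ≤ q := by omega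
  have hq' : (3 : ℝ) ≤ q := by exact_mod_cast hq3
  obtain ⟨N1, N2, N3, -, -⟩ := num_facts (q := q) (k := k) hq3 hk
  have hr : 0 < qn q (2 * k - 1) := qn_pos hq (by omega)
  have hK1 : 0 < qn q (k - 1) := qn_pos hq (by omega)
  have hK : 0 < qn q k := qn_pos hq (by omega)
  have hκ : qn q k * qn q (k - 1) / qn q (2 * k - 1) ≤ 1 / 2 := by
    rw [div_le_div_iff₀ hr (by norm_num)]; linarith
  have H1 := heavy hF hq hn hn2 (by omega) Y hdim hint P hP (by linarith)
  have H2 := deg_bound hF hq hn hn2 (by omega) Y hdim hint P hP hno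
  have hy0 : (0 : ℝ) < Y.card := by
    obtain ⟨S, hS, _⟩ := hno
    exact_mod_cast card_pos.2 ⟨S, hS⟩
  have hd0 := dg_nonneg Y P
  have hc2 : 0 ≤ gb q (2 * k - 2) (k - 2) := gb_nonneg hq _ _
  have hc1e : gb q (2 * k - 1) (k - 1)
      = qn q (2 * k - 1) / qn q (k - 1) * gb q (2 * k - 2) (k - 2) := by
    have : k - 1 = (k - 2) + 1 := by omega
    rw [this, gb]
    congr 1
  have hc1 : gb q (2 * k - 1) (k - 1) ≤ q * (qn q k * gb q (2 * k - 2) (k - 2)) := by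
    rw [hc1e, ← mul_assoc]
    apply mul_le_mul_of_nonneg_right _ hc2
    rw [div_le_iff₀ hK1]; linarith
  have hdy : dg Y P ≤ Y.card := by
    unfold dg
    exact_mod_cast card_filter_le _ _
  generalize gb q (2 * k - 1) (k - 1) = c1 at *
  generalize gb q (2 * k - 2) (k - 2) = c2 at *
  generalize qn q k * qn q (k - 1) / qn q (2 * k - 1) = κ at *
  generalize dg Y P = d at *
  generalize (Y.card : ℝ) = y at *
  generalize qn q k = K at *
  clear hc1e N1 N2 hr hK1
  generalize (q : ℝ) = x at *
  by_contra hlt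
  push Not at hlt
  set E := K * c2 with hE
  have hE0 : 0 ≤ E := mul_nonneg hK.le hc2
  have hyd : 0 ≤ d * (y - d) := mul_nonneg hd0 (by linarith)
  have a1 : d * (y - d) ≤ 4 * (x * c1 * c2) := by
    have : (1 / 4 : ℝ) ≤ (1 - κ) ^ 2 := by nlinarith
    nlinarith
  have a2 : x ^ 3 * (x + 1) * c2 ≤ E := mul_le_mul_of_nonneg_right N3 hc2
  have a3 : x * c1 * c2 ≤ x ^ 2 * E * c2 := by
    have := mul_le_mul_of_nonneg_right hc1 (mul_nonneg (by linarith : (0 : ℝ) ≤ x) hc2)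
    nlinarith
  have a4 : (x * (x + 1)) * (x ^ 2 * E * c2) ≤ E ^ 2 := by
    have := mul_le_mul_of_nonneg_right a2 hE0
    nlinarith
  have a5 : ((x + 3) * E) ^ 2 ≤ (x * y) ^ 2 := pow_le_pow_left₀ (by positivity) hbig 2
  have a6 : x * (x + 1) * (x + 3) ^ 2 * (d * (y - d)) ≤ 4 * (x * y) ^ 2 := by
    have b1 : d * (y - d) ≤ 4 * (x ^ 2 * E * c2) := by linarith
    have b2 : x * (x + 1) * (d * (y - d)) ≤ 4 * E ^ 2 := by
      have := mul_le_mul_of_nonneg_left b1 (show 0 ≤ x * (x + 1) by nlinarith)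
      linarith
    have b3 := mul_le_mul_of_nonneg_left b2 (sq_nonneg (x + 3))
    nlinarith
  have a7 : (x + 1) * (x + 3) ^ 2 * (d * (y - d)) ≤ 4 * x * y ^ 2 := by
    have hx : 0 < x := by linarith
    refine le_of_mul_le_mul_left ?_ hx
    linarith
  have hpos : 0 < (x + 1) * (x + 3) ^ 2 := by positivity
  have hy2 : 0 < y ^ 2 := by positivity
  by_cases hc : d ≤ y / 2
  · have b1 : 7 / 64 * y ^ 2 ≤ d * (y - d) := by nlinarith
    have b2 := mul_le_mul_of_nonneg_left b1 hpos.le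
    have b3 : 4 * x < (x + 1) * (x + 3) ^ 2 * (7 / 64) := by
      have b31 : 9 ≤ x ^ 2 := by nlinarith only [hq']
      have b32 : 9 * x ≤ x ^ 3 := by nlinarith only [hq', b31]
      nlinarith only [hq', b31, b32]
    have b4 := mul_lt_mul_of_pos_right b3 hy2
    linarith
  · push Not at hc
    have b0 : (x + 3) * d ≤ x * y := (mul_le_mul_of_nonneg_left H2 (by linarith)).trans hbig
    have b1 : 3 * y ≤ (x + 3) * (y - d) := by linarith
    have b2 : 3 / 2 * y ^ 2 ≤ (x + 3) * (d * (y - d)) := by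
      have := mul_le_mul_of_nonneg_left b1 hd0
      nlinarith
    have b3 := mul_le_mul_of_nonneg_left b2 (show 0 ≤ (x + 1) * (x + 3) by positivity)
    have b4 : 4 * x < (x + 1) * (x + 3) * (3 / 2) := by nlinarith only [hq', sq_nonneg x]
    have b5 := mul_lt_mul_of_pos_right b4 hy2
    linarith

include hF hq3 hn in
lemma hyper_light (hn2 : n = 2 * k) (hk : 5 ≤ k) (Y : Finset (Submodule F V))
    (hdim : ∀ R ∈ Y, finrank F R = k) (hint : ∀ R ∈ Y, ∀ S ∈ Y, R ⊓ S ≠ ⊥)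
    (hbig : ((q : ℝ) + 3) * (qn q k * gb q (2 * k - 2) (k - 2)) ≤ q * Y.card)
    (H : Submodule F V) (hH : finrank F H = n - 1) (hno : ∃ S ∈ Y, ¬ S ≤ H) :
    hg Y H ≤ Y.card / 8 := by
  have : Finite (Dual F V) := Module.finite_of_finite F
  have hinj : Function.Injective (fun W : Submodule F V => W.dualAnnihilator) := by
    intro A B h
    exact Subspace.dualAnnihilator_inj.1 h
  have hle : ∀ A B : Submodule F V, A.dualAnnihilator ≤ B.dualAnnihilator ↔ B ≤ A := fun A B =>
    Subspace.dualAnnihilator_le_dualAnnihilator_iff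
  have hrank : ∀ A : Submodule F V, finrank F A.dualAnnihilator = n - finrank F A := by
    intro A
    have := Subspace.finrank_add_finrank_dualAnnihilator_eq A
    omega
  set Y' : Finset (Submodule F (Dual F V)) := Y.image (fun W => W.dualAnnihilator) with hY'
  have hcard : Y'.card = Y.card := card_image_of_injective _ hinj
  have hdg : dg Y' H.dualAnnihilator = hg Y H := by
    unfold dg hg
    rw [hY', filter_image, card_image_of_injective _ hinj]
    simp only [hle]
  rw [← hdg, ← hcard]
  apply point_light hF hq3 (n := n) (k := k) (by rw [Subspace.dual_finrank_eq, hn]) hn2 hk Y'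
  · intro R hR
    obtain ⟨A, hA, rfl⟩ := mem_image.1 hR
    rw [hrank, hdim A hA]; omega
  · intro R hR S hS
    obtain ⟨A, hA, rfl⟩ := mem_image.1 hR
    obtain ⟨B, hB, rfl⟩ := mem_image.1 hS
    intro hbot
    have h1 : (A ⊔ B).dualAnnihilator = ⊥ := by
      rw [Submodule.dualAnnihilator_sup_eq]; exact hbot
    have h2 := hrank (A ⊔ B)
    rw [h1, finrank_bot] at h2
    have h3 := Submodule.finrank_sup_add_finrank_inf_eq A B
    have h4 : finrank F (A ⊓ B : Submodule F V) ≠ 0 := by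
      intro h0
      exact hint A hA B hB (Submodule.finrank_eq_zero.1 h0)
    have h5 := hdim A hA
    have h6 := hdim B hB
    omega
  · rw [hcard]; exact hbig
  · rw [hrank, hH]; omega
  · obtain ⟨S, hS, hSH⟩ := hno
    refine ⟨S.dualAnnihilator, mem_image_of_mem _ hS, ?_⟩
    rw [hle]; exact hSH

include hF hq3 hn in
lemma main_bound (hn2 : n = 2 * k) (hk : 5 ≤ k) (Y : Finset (Submodule F V))
    (hdim : ∀ R ∈ Y, finrank F R = k) (hint : ∀ R ∈ Y, ∀ S ∈ Y, R ⊓ S ≠ ⊥)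
    (hdict : ∀ P : Submodule F V, finrank F P = 1 → ∃ S ∈ Y, ¬ P ≤ S)
    (hdual : ∀ H : Submodule F V, finrank F H = n - 1 → ∃ S ∈ Y, ¬ S ≤ H)
    (hY : 0 < Y.card) :
    q * (Y.card : ℝ) < (q + 3) * (qn q k * gb q (2 * k - 2) (k - 2)) := by
  by_contra hbig
  push Not at hbig
  have hq : 2 ≤ q := by omega
  have hq' : (3 : ℝ) ≤ q := by exact_mod_cast hq3
  obtain ⟨-, -, N3, N4, N5⟩ := num_facts (q := q) (k := k) hq3 hk
  have hy0 : (0 : ℝ) < Y.card := by exact_mod_cast hY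
  have h := light hF hq hn hn2 (by omega) Y hdim hint hY (Y.card / 8) (Y.card / 8)
    (fun P hP => point_light hF hq3 hn hn2 hk Y hdim hint hbig P (mem_gr.1 hP)
      (hdict P (mem_gr.1 hP)))
    (fun H hH => hyper_light hF hq3 hn hn2 hk Y hdim hint hbig H (mem_gr.1 hH)
      (hdual H (mem_gr.1 hH))) (by positivity) (by positivity)
  have hc2 : 0 ≤ gb q (2 * k - 2) (k - 2) := gb_nonneg hq _ _
  rw [mul_div_assoc] at h
  generalize gb q (2 * k - 2) (k - 2) = c2 at *
  generalize qn q k ^ 2 / qn q (2 * k) = A at *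
  generalize qn q k / qn q (2 * k) = B at *
  generalize (Y.card : ℝ) = y at *
  generalize qn q k = K at *
  generalize (q : ℝ) = x at *
  have hs : Real.sqrt (x * (x + 1) * c2 * y) ≤ 24 / 100 * y := by
    apply Real.sqrt_le_iff.2
    refine ⟨by positivity, ?_⟩
    have a2 : x ^ 3 * (x + 1) * c2 ≤ K * c2 := mul_le_mul_of_nonneg_right N3 hc2
    have a3 : (x + 3) * (x ^ 3 * (x + 1) * c2) ≤ x * y :=
      (mul_le_mul_of_nonneg_left a2 (by linarith)).trans hbig
    have a4 : (x + 3) * x * (x * (x + 1) * c2) ≤ y := by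
      have hx : 0 < x := by linarith
      refine le_of_mul_le_mul_left ?_ hx
      linarith
    have a5 : 0 ≤ x * (x + 1) * c2 := by positivity
    have a6 : 18 * (x * (x + 1) * c2) ≤ y := by
      have : (18 : ℝ) ≤ (x + 3) * x := by nlinarith
      exact (mul_le_mul_of_nonneg_right this a5).trans a4
    nlinarith
  nlinarith

lemma gb_prod (hq : 2 ≤ q) (m : ℕ) : ∀ N, gb q N m
    = (∏ i ∈ Finset.range m, ((q : ℝ) ^ (N - i) - 1)) /
        ∏ i ∈ Finset.range m, ((q : ℝ) ^ (i + 1) - 1) := by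
  have hq' : (1 : ℝ) < q := by exact_mod_cast hq
  have h0 : (q : ℝ) - 1 ≠ 0 := by linarith
  induction m with
  | zero => intro N; simp [gb]
  | succ m ih =>
    intro N
    have e : ∀ i ∈ Finset.range m, (q : ℝ) ^ (N - (i + 1)) - 1 = (q : ℝ) ^ (N - 1 - i) - 1 := by
      intro i _
      rw [show N - (i + 1) = N - 1 - i by omega]
    rw [gb, ih, prod_range_succ', prod_range_succ (fun i => (q : ℝ) ^ (i + 1) - 1),
      prod_congr rfl e]
    unfold qn
    rw [div_div_div_cancel_right₀ h0, div_mul_div_comm, Nat.sub_zero]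
    congr 1 <;> ring

lemma gaussBinom_cast (hq : 2 ≤ q) (N m : ℕ) : ((gaussBinom q N m : ℚ) : ℝ) = gb q N m := by
  rw [gb_prod hq, ← prod_div_distrib]
  unfold gaussBinom
  push_cast
  rfl

lemma gaussBinom_one (hq : 2 ≤ q) (N : ℕ) : ((gaussBinom q N 1 : ℚ) : ℝ) = qn q N := by
  rw [gaussBinom_cast hq]
  simp [gb, qn_one hq]

end final

end WHM

/-- Theorem 1.5 (weak Hilton–Milner): for `q ≥ 3` and `k ≥ 5`, every independent set `Y` of
the `q`-Kneser graph `qK_{2k:k}` (i.e. intersecting family of `k`-spaces of `F_q^{2k}`)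
that is not contained in a dictator nor in the dual of a dictator satisfies
`|Y| < (1 + 3/q)·[k choose 1]_q·[2k-2 choose k-2]_q`. -/
theorem weak_hilton_milner (q k : ℕ) (hq3 : 3 ≤ q) (hq : IsPrimePow q) (hk : 5 ≤ k)
    (F : Type) [Field F] [Fintype F] (hF : Fintype.card F = q)
    (Y : Set (Submodule F (Fin (2 * k) → F)))
    (hdim : ∀ R ∈ Y, Module.finrank F R = k)
    (hint : ∀ R ∈ Y, ∀ S ∈ Y, R ⊓ S ≠ ⊥)
    (hdict : ¬ ∃ p : Submodule F (Fin (2 * k) → F), Module.finrank F p = 1 ∧ ∀ R ∈ Y, p ≤ R)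
    (hdual : ¬ ∃ H : Submodule F (Fin (2 * k) → F),
      Module.finrank F H = 2 * k - 1 ∧ ∀ R ∈ Y, R ≤ H) :
    (Nat.card Y : ℚ) <
      (1 + 3 / (q : ℚ)) * gaussBinom q k 1 * gaussBinom q (2 * k - 2) (k - 2) := by
  classical
  have hq2 : 2 ≤ q := by omega
  set Z := (Set.toFinite Y).toFinset with hZ
  have hmem : ∀ R, R ∈ Z ↔ R ∈ Y := fun R => by simp [hZ]
  have hcard : Nat.card Y = Z.card := by
    rw [hZ, ← Set.ncard_eq_toFinset_card, Nat.card_coe_set_eq]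
  have hn : Module.finrank F (Fin (2 * k) → F) = 2 * k := by simp
  have hdict' : ∀ P : Submodule F (Fin (2 * k) → F), Module.finrank F P = 1 →
      ∃ S ∈ Z, ¬ P ≤ S := by
    intro P hP
    by_contra hcon
    push Not at hcon
    exact hdict ⟨P, hP, fun R hR => hcon R ((hmem R).2 hR)⟩
  have hdual' : ∀ H : Submodule F (Fin (2 * k) → F), Module.finrank F H = 2 * k - 1 →
      ∃ S ∈ Z, ¬ S ≤ H := by
    intro H hH
    by_contra hcon
    push Not at hcon
    exact hdual ⟨H, hH, fun R hR => hcon R ((hmem R).2 hR)⟩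
  have hpos : 0 < Z.card := by
    obtain ⟨v, hv⟩ : ∃ v : Fin (2 * k) → F, v ≠ 0 := by
      refine ⟨fun _ => 1, fun h => ?_⟩
      have := congrFun h ⟨0, by omega⟩
      simp at this
    obtain ⟨S, hS, _⟩ := hdict' (Submodule.span F {v}) (finrank_span_singleton hv)
    exact Finset.card_pos.2 ⟨S, hS⟩
  have h := WHM.main_bound hF hq3 hn rfl hk Z (fun R hR => hdim R ((hmem R).1 hR))
    (fun R hR S hS => hint R ((hmem R).1 hR) S ((hmem S).1 hS)) hdict' hdual' hpos
  have hqp : (0 : ℝ) < q := by exact_mod_cast (by omega : 0 < q)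
  rw [hcard]
  have goalR : (Z.card : ℝ) < (1 + 3 / (q : ℝ)) * ((gaussBinom q k 1 : ℚ) : ℝ)
      * ((gaussBinom q (2 * k - 2) (k - 2) : ℚ) : ℝ) := by
    rw [WHM.gaussBinom_one hq2, WHM.gaussBinom_cast hq2]
    refine lt_of_mul_lt_mul_left ?_ hqp.le
    refine h.trans_le (le_of_eq ?_)
    field_simp
  refine (Rat.cast_lt (K := ℝ)).1 ?_
  push_cast
  exact goalR
end

section
/- Let q ≥ 4 and k ≥ 4. Every independent set Y of the q-Kneser graph qK_{2k:k} that is not contained in a dictator nor in the dual of a dictator satisfies |Y| < 3·[k choose 1]_q·[2k−2 choose k−2]_q. -/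
set_option linter.unusedSectionVars false

namespace WHM
open Finset Module

noncomputable def bn (q n : ℕ) : ℚ := ((q : ℚ) ^ n - 1) / ((q : ℚ) - 1)

lemma gb_one (q n : ℕ) : gaussBinom q n 1 = bn q n := by simp [gaussBinom, bn]
lemma gb_zero (q n : ℕ) : gaussBinom q n 0 = 1 := by simp [gaussBinom]

lemma bn_pos {q n : ℕ} (hq : 2 ≤ q) (hn : 1 ≤ n) : 0 < bn q n := by
  have h2 : (2:ℚ) ≤ q := by exact_mod_cast hq
  have : (1:ℚ) < (q:ℚ)^n := one_lt_pow₀ (by linarith) (by omega)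
  exact div_pos (by linarith) (by linarith)

lemma gb_rec {q : ℕ} (hq : 2 ≤ q) (n j : ℕ) :
    gaussBinom q n (j+1) * bn q (j+1) = bn q n * gaussBinom q (n-1) j := by
  have h2 : (2:ℚ) ≤ q := by exact_mod_cast hq
  have hne : ∀ m : ℕ, (q:ℚ)^(m+1) - 1 ≠ 0 := by
    intro m
    have : (1:ℚ) < (q:ℚ)^(m+1) := one_lt_pow₀ (by linarith) (by omega)
    linarith
  have h1 : (q:ℚ) - 1 ≠ 0 := by linarith
  unfold gaussBinom bn
  rw [prod_div_distrib, prod_div_distrib, prod_range_succ', prod_range_succ (fun i => (q:ℚ)^(i+1) - 1)]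
  have e : ∏ i ∈ range j, ((q:ℚ)^(n - (i+1)) - 1) = ∏ i ∈ range j, ((q:ℚ)^(n - 1 - i) - 1) :=
    prod_congr rfl fun i _ => by rw [show n - (i+1) = n - 1 - i by omega]
  rw [e, Nat.sub_zero]
  have hp : ∏ i ∈ range j, ((q:ℚ)^(i+1) - 1) ≠ 0 := prod_ne_zero_iff.mpr fun i _ => hne i
  have := hne j
  field_simp

lemma gb_nonneg_s16 {q : ℕ} (hq : 2 ≤ q) (n j : ℕ) : 0 ≤ gaussBinom q n j := by
  have h2 : (1:ℚ) ≤ q := by exact_mod_cast (by omega : 1 ≤ q)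
  refine prod_nonneg fun i _ => div_nonneg ?_ ?_ <;> linarith [one_le_pow₀ h2 (n := n - i), one_le_pow₀ h2 (n := i+1)]

lemma gb_pos {q : ℕ} (hq : 2 ≤ q) (n j : ℕ) (h : j ≤ n) : 0 < gaussBinom q n j := by
  have h2 : (1:ℚ) < q := by exact_mod_cast (by omega : 1 < q)
  refine prod_pos fun i hi => div_pos ?_ ?_
  · have := mem_range.mp hi
    linarith [one_lt_pow₀ h2 (n := n - i) (by omega)]
  · linarith [one_lt_pow₀ h2 (n := i+1) (by omega)]

lemma gb_top {q : ℕ} (hq : 2 ≤ q) (n : ℕ) : gaussBinom q n n = 1 := by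
  induction n with
  | zero => simp [gb_zero]
  | succ n ih =>
    have := gb_rec hq (n+1) n
    have h := bn_pos hq (show 1 ≤ n+1 by omega)
    simp only [Nat.add_sub_cancel, ih] at this
    exact mul_right_cancel₀ h.ne' (by linarith)

lemma gb_pred {q : ℕ} (hq : 2 ≤ q) (n : ℕ) : gaussBinom q (n+1) n = bn q (n+1) := by
  induction n with
  | zero => 
    have h2 : (2:ℚ) ≤ q := by exact_mod_cast hq
    have : (q:ℚ) - 1 ≠ 0 := by linarith
    simp [gb_zero, bn, this]
  | succ n ih =>
    have := gb_rec hq (n+1+1) n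
    have h := bn_pos hq (show 1 ≤ n+1 by omega)
    simp only [Nat.add_sub_cancel, ih] at this
    exact mul_right_cancel₀ h.ne' this

variable {F V : Type} [Field F] [Fintype F] [AddCommGroup V] [Module F V] [FiniteDimensional F V]

instance finSub : Finite (Submodule F V) := by
  have : Finite V := Module.finite_of_finite F
  exact Finite.of_injective (fun W => (W : Set V)) SetLike.coe_injective

noncomputable instance ftSub : Fintype (Submodule F V) := Fintype.ofFinite _

open Classical in
/-- `k`-spaces between `T` and `W`. -/
noncomputable def iv (T W : Submodule F V) (k : ℕ) : Finset (Submodule F V) :=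
  univ.filter fun R => T ≤ R ∧ R ≤ W ∧ finrank F R = k

lemma finrank_sup_span {T : Submodule F V} {v : V} (hv : v ∉ T) :
    finrank F (T ⊔ F ∙ v : Submodule F V) = finrank F T + 1 := by
  have hv0 : v ≠ 0 := fun h => hv (h ▸ T.zero_mem)
  have h := Submodule.finrank_sup_add_finrank_inf_eq T (F ∙ v)
  rw [finrank_span_singleton hv0] at h
  have : T ⊓ (F ∙ v) = ⊥ := by
    rw [← disjoint_iff, Submodule.disjoint_span_singleton' hv0] 
    exact hv
  rw [this, finrank_bot] at h
  omega


open Classical in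
lemma mem_iv {T W R : Submodule F V} {k : ℕ} :
    R ∈ iv T W k ↔ T ≤ R ∧ R ≤ W ∧ finrank F R = k := by simp [iv]

lemma two_le_card : 2 ≤ Fintype.card F := Fintype.one_lt_card

/-- vectors of `W` outside `T` -/
lemma card_diff {T W : Submodule F V} (h : T ≤ W) :
    (Nat.card {v : V // v ∈ W ∧ v ∉ T} : ℚ) =
      (Fintype.card F : ℚ) ^ finrank F W - (Fintype.card F : ℚ) ^ finrank F T := by
  classical
  have hV : Finite V := Module.finite_of_finite F
  have hc : ∀ U : Submodule F V, (Set.ncard (U : Set V)) = (Fintype.card F) ^ finrank F U := by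
    intro U
    have : Fintype U := Fintype.ofFinite _
    rw [← Module.card_eq_pow_finrank (K := F) (V := U), ← Nat.card_coe_set_eq]
    exact Nat.card_eq_fintype_card
  have h1 : Nat.card {v : V // v ∈ W ∧ v ∉ T} = Set.ncard ((W : Set V) \ (T : Set V)) := by
    rw [← Nat.card_coe_set_eq]; rfl
  have h2 := Set.ncard_sdiff_add_ncard_of_subset (s := (T : Set V)) (t := (W : Set V)) h
  rw [h1, eq_sub_iff_add_eq]
  rw [hc, hc] at h2
  exact_mod_cast h2

open Classical in
lemma card_iv_succ {T W : Submodule F V} (h : T ≤ W) :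
    ((iv T W (finrank F T + 1)).card : ℚ) =
      bn (Fintype.card F) (finrank F W - finrank F T) := by
  have hV : Finite V := Module.finite_of_finite F
  have : Fintype V := Fintype.ofFinite V
  set t := finrank F T with ht
  set q := Fintype.card F with hq
  have hq2 : (2:ℚ) ≤ q := by exact_mod_cast two_le_card (F := F)
  -- double count
  have key : ∑ L ∈ iv T W (t+1), ((univ.filter fun v : V => v ∈ L ∧ v ∉ T).card)
      = (univ.filter fun v : V => v ∈ W ∧ v ∉ T).card := by
    rw [← card_biUnion]
    · congr 1
      ext v
      simp only [mem_biUnion, mem_filter, mem_univ, true_and, mem_iv]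
      constructor
      · rintro ⟨L, ⟨h1, h2, h3⟩, h4, h5⟩
        exact ⟨h2 h4, h5⟩
      · rintro ⟨h1, h2⟩
        refine ⟨T ⊔ F ∙ v, ⟨le_sup_left, sup_le h (by simpa using h1), finrank_sup_span h2⟩, ?_, h2⟩
        exact (le_sup_right : F ∙ v ≤ _) (Submodule.mem_span_singleton_self v)
    · intro L hL L' hL' hne
      rw [Function.onFun, disjoint_left]
      intro v hv hv'
      simp only [mem_filter, mem_univ, true_and] at hv hv'
      rw [mem_coe, mem_iv] at hL hL'
      apply hne
      have : ∀ L : Submodule F V, T ≤ L → finrank F L = t + 1 → v ∈ L → T ⊔ F ∙ v = L := by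
        intro L h1 h2 h3
        refine Submodule.eq_of_le_of_finrank_eq (sup_le h1 (by simpa using h3)) ?_
        rw [finrank_sup_span hv.2, h2]
      rw [← this L hL.1 hL.2.2 hv.1, ← this L' hL'.1 hL'.2.2 hv'.1]
  have hcard : ∀ U : Submodule F V, T ≤ U →
      (((univ.filter fun v : V => v ∈ U ∧ v ∉ T).card : ℕ) : ℚ) = (q:ℚ)^finrank F U - (q:ℚ)^t := by
    intro U hU
    rw [← card_diff hU, Nat.card_eq_fintype_card, Fintype.card_subtype]
  have key2 := congrArg (fun n : ℕ => (n : ℚ)) key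
  simp only [Nat.cast_sum] at key2
  rw [hcard W h, sum_congr rfl (fun L hL => by
    rw [hcard L (mem_iv.mp hL).1, (mem_iv.mp hL).2.2]), sum_const, nsmul_eq_mul] at key2
  have hle : t ≤ finrank F W := Submodule.finrank_mono h
  obtain ⟨m, hm⟩ := Nat.exists_eq_add_of_le hle
  rw [hm] at key2 ⊢
  rw [Nat.add_sub_cancel_left, bn, eq_div_iff (by linarith)]
  have hp : (q:ℚ)^t ≠ 0 := by positivity
  apply mul_left_cancel₀ hp
  rw [pow_add, pow_add] at key2
  linear_combination key2

open Classical in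
lemma card_iv (j : ℕ) : ∀ {T W : Submodule F V}, T ≤ W → 
    ((iv T W (finrank F T + j)).card : ℚ) =
      gaussBinom (Fintype.card F) (finrank F W - finrank F T) j := by
  have hq := two_le_card (F := F)
  induction j with
  | zero =>
    intro T W h
    have : iv T W (finrank F T + 0) = {T} := by
      ext R
      rw [mem_iv, mem_singleton]
      constructor
      · rintro ⟨h1, h2, h3⟩
        exact (Submodule.eq_of_le_of_finrank_eq h1 (by simpa using h3.symm)).symm
      · rintro rfl
        exact ⟨le_rfl, h, rfl⟩
    rw [this, gb_zero]; simp
  | succ j ih =>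
    intro T W h
    have dc := sum_card_bipartiteAbove_eq_sum_card_bipartiteBelow
      (s := iv T W (finrank F T + 1)) (t := iv T W (finrank F T + (j+1))) (fun L R => L ≤ R)
    have e1 : ∀ L ∈ iv T W (finrank F T + 1),
        ((bipartiteAbove (fun L R : Submodule F V => L ≤ R) (iv T W (finrank F T + (j+1))) L).card : ℚ)
          = gaussBinom (Fintype.card F) (finrank F W - finrank F T - 1) j := by
      intro L hL
      obtain ⟨h1, h2, h3⟩ := mem_iv.mp hL
      have := ih h2
      rw [h3] at this
      rw [Nat.sub_sub, ← this]
      congr 2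
      ext R
      simp only [bipartiteAbove, mem_filter, mem_iv]
      constructor
      · rintro ⟨⟨a, b, c⟩, d⟩
        exact ⟨d, b, by omega⟩
      · rintro ⟨a, b, c⟩
        exact ⟨⟨h1.trans a, b, by omega⟩, a⟩
    have e2 : ∀ R ∈ iv T W (finrank F T + (j+1)),
        ((bipartiteBelow (fun L R : Submodule F V => L ≤ R) (iv T W (finrank F T + 1)) R).card : ℚ)
          = bn (Fintype.card F) (j+1) := by
      intro R hR
      obtain ⟨h1, h2, h3⟩ := mem_iv.mp hR
      have := card_iv_succ h1
      rw [h3, Nat.add_sub_cancel_left] at this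
      rw [← this]
      congr 2
      ext L
      simp only [bipartiteBelow, mem_filter, mem_iv]
      constructor
      · rintro ⟨⟨a, b, c⟩, d⟩
        exact ⟨a, d, c⟩
      · rintro ⟨a, b, c⟩
        exact ⟨⟨a, b.trans h2, c⟩, b⟩
    have dc2 := congrArg (fun n : ℕ => (n : ℚ)) dc
    simp only [Nat.cast_sum] at dc2
    rw [sum_congr rfl e1, sum_congr rfl e2, sum_const, sum_const, nsmul_eq_mul, nsmul_eq_mul,
      card_iv_succ h, ← gb_rec hq] at dc2
    exact (mul_right_cancel₀ (bn_pos hq (by omega)).ne' dc2).symm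

lemma card_iv' {T W : Submodule F V} (h : T ≤ W) {t w k : ℕ} (ht : finrank F T = t)
    (hw : finrank F W = w) (hk : t ≤ k) :
    ((iv T W k).card : ℚ) = gaussBinom (Fintype.card F) (w - t) (k - t) := by
  have := card_iv (k - t) h
  rw [ht, hw] at this
  rw [← this]
  congr 3
  omega

lemma gb_rec2 {q : ℕ} (hq : 2 ≤ q) (n j : ℕ) :
    gaussBinom q n (j+1) * bn q (j+1) = gaussBinom q n j * bn q (n - j) := by
  have h2 : (2:ℚ) ≤ q := by exact_mod_cast hq
  have : (1:ℚ) < (q:ℚ)^(j+1) := one_lt_pow₀ (by linarith) (by omega)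
  have h3 : (q:ℚ)^(j+1) - 1 ≠ 0 := by linarith
  have h1 : (q:ℚ) - 1 ≠ 0 := by linarith
  unfold gaussBinom bn
  rw [prod_range_succ]
  field_simp

lemma gb_rec3 {q : ℕ} (hq : 2 ≤ q) (n j : ℕ) :
    bn q n * gaussBinom q (n-1) j = gaussBinom q n j * bn q (n - j) := by
  rw [← gb_rec hq, gb_rec2 hq]

open Classical in
/-- Abstract second moment bound. -/
lemma cheb {α β : Type} (RR A : Finset α) (HH : Finset β) (r : α → β → Prop) (h : β → ℚ)
    (a z n1 n2 M : ℚ) (hA : A ⊆ RR)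
    (h0 : ∀ H ∈ HH, 0 ≤ h H) (ha : ∀ H ∈ HH, h H ≤ a)
    (hM : (RR.card : ℚ) = M) (hMpos : 0 < M) (hn2 : 0 ≤ n2) (hn1 : 0 ≤ n1)
    (hn1c : ∀ H ∈ HH, ((RR.filter fun R => r R H).card : ℚ) = n1)
    (hn2c : ∀ H ∈ HH, ∀ H' ∈ HH, H ≠ H' → ((RR.filter fun R => r R H ∧ r R H').card : ℚ) = n2)
    (hnn : n2 * M ≤ n1 ^ 2)
    (hz : ∀ R ∈ A, z ≤ ∑ H ∈ HH.filter (fun H => r R H), h H)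
    (hmu : n1 * (∑ H ∈ HH, h H) / M ≤ z) :
    (A.card : ℚ) * (z - n1 * (∑ H ∈ HH, h H) / M) ^ 2 ≤ n1 * a * ∑ H ∈ HH, h H := by
  set s := ∑ H ∈ HH, h H with hs
  set μ := n1 * s / M with hμ
  let f : α → ℚ := fun R => ∑ H ∈ HH, h H * (if r R H then 1 else 0)
  have hf : ∀ R, f R = ∑ H ∈ HH.filter (fun H => r R H), h H := by
    intro R
    simp only [f, mul_ite, mul_one, mul_zero, sum_filter]
  have s1 : ∑ R ∈ RR, f R = n1 * s := by
    simp only [f]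
    rw [sum_comm, hs, mul_sum]
    refine sum_congr rfl fun H hH => ?_
    rw [← mul_sum, ← hn1c H hH, sum_boole, mul_comm]
  have s2 : ∑ R ∈ RR, f R ^ 2 = n2 * s ^ 2 + (n1 - n2) * ∑ H ∈ HH, h H ^ 2 := by
    have e1 : ∀ R, f R ^ 2 = ∑ H ∈ HH, ∑ H' ∈ HH, h H * h H' * (if r R H ∧ r R H' then 1 else 0) := by
      intro R
      rw [sq, sum_mul_sum]
      refine sum_congr rfl fun H _ => sum_congr rfl fun H' _ => ?_
      by_cases c1 : r R H <;> by_cases c2 : r R H' <;> simp [c1, c2]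
    simp only [e1]
    rw [sum_comm]
    have e2 : ∀ H ∈ HH, ∑ R ∈ RR, ∑ H' ∈ HH, h H * h H' * (if r R H ∧ r R H' then (1:ℚ) else 0)
        = n2 * (h H * s) + (n1 - n2) * h H ^ 2 := by
      intro H hH
      rw [sum_comm]
      have : ∀ H' ∈ HH, ∑ R ∈ RR, h H * h H' * (if r R H ∧ r R H' then (1:ℚ) else 0)
          = n2 * h H * h H' + (if H' = H then (n1 - n2) * h H ^ 2 else 0) := by
        intro H' hH'
        rw [← mul_sum, sum_boole]
        by_cases e : H' = H
        · subst e
          simp only [and_self, if_true]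
          rw [hn1c H' hH]; ring
        · rw [hn2c H hH H' hH' (Ne.symm e), if_neg e]; ring
      rw [sum_congr rfl this, sum_add_distrib, ← mul_sum, sum_ite_eq' HH H, if_pos hH, ← hs]
      ring
    rw [sum_congr rfl e2, sum_add_distrib, ← mul_sum, ← mul_sum, ← sum_mul, ← hs]
    ring
  have hsq : ∑ H ∈ HH, h H ^ 2 ≤ a * s := by
    rw [hs, mul_sum]
    refine sum_le_sum fun H hH => ?_
    rw [sq]
    exact mul_le_mul_of_nonneg_right (ha H hH) (h0 H hH)
  have hsq0 : 0 ≤ ∑ H ∈ HH, h H ^ 2 := sum_nonneg fun H _ => sq_nonneg _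
  have t1 : (A.card : ℚ) * (z - μ) ^ 2 ≤ ∑ R ∈ RR, (f R - μ) ^ 2 := by
    calc (A.card : ℚ) * (z - μ) ^ 2 = ∑ R ∈ A, (z - μ) ^ 2 := by rw [sum_const, nsmul_eq_mul]
      _ ≤ ∑ R ∈ A, (f R - μ) ^ 2 := by
        refine sum_le_sum fun R hR => ?_
        have := hz R hR
        rw [← hf] at this
        exact pow_le_pow_left₀ (by linarith) (by linarith) 2
      _ ≤ _ := sum_le_sum_of_subset_of_nonneg hA fun _ _ _ => sq_nonneg _
  have t2 : ∑ R ∈ RR, (f R - μ) ^ 2 = (∑ R ∈ RR, f R ^ 2) - 2 * μ * (∑ R ∈ RR, f R) + M * μ ^ 2 := by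
    rw [← hM, mul_sum, ← nsmul_eq_mul, ← sum_const, ← sum_sub_distrib, ← sum_add_distrib]
    exact sum_congr rfl fun R _ => by ring
  have t3 : μ * M = n1 * s := by rw [hμ]; field_simp
  have t4 : n2 * s ^ 2 ≤ μ * (n1 * s) := by
    have : μ * (n1 * s) = n1 ^ 2 * s ^ 2 / M := by rw [hμ]; field_simp
    rw [this, le_div_iff₀ hMpos]
    nlinarith [mul_le_mul_of_nonneg_right hnn (sq_nonneg s)]
  have t5 : M * μ ^ 2 = μ * (n1 * s) := by rw [← t3]; ring
  rw [t2, s1, s2, t5] at t1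
  have t6 : (n1 - n2) * ∑ H ∈ HH, h H ^ 2 ≤ n1 * (a * s) := by
    nlinarith [mul_nonneg hn2 hsq0, mul_le_mul_of_nonneg_left hsq hn1]
  linarith

/-- hyperplanes -/
lemma card_hyp {n j : ℕ} (hV : finrank F V = n) {T : Submodule F V} (hT : finrank F T = j)
    (hj : j < n) : ((iv T ⊤ (n-1)).card : ℚ) = bn (Fintype.card F) (n - j) := by
  obtain ⟨m, hm⟩ : ∃ m, n = j + (m + 1) := ⟨n - j - 1, by omega⟩
  rw [card_iv' le_top hT (by rw [finrank_top, hV]) (by omega), show n - j = m + 1 by omega,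
    show n - 1 - j = m by omega, gb_pred two_le_card]

lemma exists_hyp {n : ℕ} (hV : finrank F V = n) {T : Submodule F V} (hT : T ≠ ⊤) :
    (iv T ⊤ (n-1)).Nonempty := by
  have hlt : finrank F T < n := hV ▸ Submodule.finrank_lt hT
  rw [← card_pos]
  have := card_hyp hV (T := T) rfl hlt
  have h2 : (0:ℚ) < ((iv T ⊤ (n-1)).card : ℚ) := by
    rw [this]; exact bn_pos two_le_card (by omega)
  exact_mod_cast h2

lemma finrank_sup_point {P S : Submodule F V} (hP : finrank F P = 1) (h : ¬ P ≤ S) :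
    finrank F (P ⊔ S : Submodule F V) = finrank F S + 1 := by
  obtain ⟨v, hv, hvs⟩ := Set.not_subset.mp h
  have hv0 : v ≠ 0 := fun h => hvs (h ▸ S.zero_mem)
  have : F ∙ v = P := by
    refine Submodule.eq_of_le_of_finrank_eq (by simpa using hv) ?_
    rw [finrank_span_singleton hv0, hP]
  rw [← this, sup_comm]
  exact finrank_sup_span hvs

lemma sup_ne_top {k : ℕ} (hV : finrank F V = 2 * k) {R S : Submodule F V} (hR : finrank F R = k)
    (hS : finrank F S = k) (h : R ⊓ S ≠ ⊥) : R ⊔ S ≠ ⊤ := by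
  intro ht
  have := Submodule.finrank_sup_add_finrank_inf_eq R S
  rw [ht, finrank_top, hV, hR, hS] at this
  exact h (Submodule.finrank_eq_zero.mp (by omega))

lemma finrank_inf_hyp {n : ℕ} (hn : 2 ≤ n) (hV : finrank F V = n) {H H' : Submodule F V}
    (hH : finrank F H = n - 1) (hH' : finrank F H' = n - 1) (hne : H ≠ H') :
    finrank F (H ⊓ H' : Submodule F V) = n - 2 := by
  have h1 := Submodule.finrank_sup_add_finrank_inf_eq H H'
  have h2 : finrank F (H ⊔ H' : Submodule F V) ≤ n := hV ▸ Submodule.finrank_le _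
  have h3 : finrank F (H ⊔ H' : Submodule F V) ≠ n - 1 := by
    intro h
    apply hne
    have e1 := Submodule.eq_of_le_of_finrank_eq (le_sup_left : H ≤ H ⊔ H') (by rw [h, hH])
    have e2 := Submodule.eq_of_le_of_finrank_eq (le_sup_right : H' ≤ H ⊔ H') (by rw [h, hH'])
    rw [e1]; exact e2.symm
  have h4 : n - 1 ≤ finrank F (H ⊔ H' : Submodule F V) := hH ▸ Submodule.finrank_mono le_sup_left
  omega

lemma c_lt {q k : ℕ} (hq : 4 ≤ q) (hk : 3 ≤ k) :
    bn q k * bn q (k-1) / bn q (2*k-1) * ((q:ℚ) - 1) ≤ 1 := by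
  obtain ⟨m, rfl⟩ : ∃ m, k = m + 1 := ⟨k - 1, by omega⟩
  have h4 : (4:ℚ) ≤ q := by exact_mod_cast hq
  have e : 2 * (m+1) - 1 = 2 * m + 1 := by omega
  have e2 : m + 1 - 1 = m := by omega
  rw [e, e2]
  have hp := bn_pos (q := q) (n := 2*m+1) (by omega) (by omega)
  have hx : (1:ℚ) ≤ (q:ℚ)^m := one_le_pow₀ (by linarith)
  rw [div_mul_eq_mul_div, div_le_one hp]
  unfold bn
  have h1 : (0:ℚ) < (q:ℚ) - 1 := by linarith
  rw [div_mul_div_comm, div_mul_eq_mul_div, mul_div_mul_right _ _ h1.ne', div_le_div_iff_of_pos_right h1]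
  rw [pow_succ, pow_succ, two_mul, pow_add]
  nlinarith

lemma nn_le {q k : ℕ} (hq : 4 ≤ q) (hk : 3 ≤ k) :
    gaussBinom q (2*k-3) (k-1) * gaussBinom q (2*k-1) (k-1) ≤ gaussBinom q (2*k-2) (k-1) ^ 2 := by
  have hq2 : 2 ≤ q := by omega
  have e1 := gb_rec3 hq2 (2*k-1) (k-1)
  have e2 := gb_rec3 hq2 (2*k-2) (k-1)
  rw [show 2*k-1-1 = 2*k-2 by omega, show 2*k-1-(k-1) = k by omega] at e1
  rw [show 2*k-2-1 = 2*k-3 by omega, show 2*k-2-(k-1) = k-1 by omega] at e2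
  have p1 := bn_pos hq2 (show 1 ≤ 2*k-1 by omega)
  have p2 := bn_pos hq2 (show 1 ≤ 2*k-2 by omega)
  have p3 := bn_pos hq2 (show 1 ≤ k by omega)
  have hn := gb_nonneg_s16 hq2 (2*k-2) (k-1)
  set n1 := gaussBinom q (2*k-2) (k-1)
  set n2 := gaussBinom q (2*k-3) (k-1)
  set M := gaussBinom q (2*k-1) (k-1)
  have key : bn q (k-1) * bn q (2*k-1) ≤ bn q k * bn q (2*k-2) := by
    obtain ⟨m, rfl⟩ : ∃ m, k = m + 1 := ⟨k - 1, by omega⟩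
    have h4 : (4:ℚ) ≤ q := by exact_mod_cast hq
    rw [show 2 * (m+1) - 1 = m + m + 1 by omega, show 2*(m+1) - 2 = m + m by omega,
      show m + 1 - 1 = m by omega]
    have hx : (1:ℚ) ≤ (q:ℚ)^m := one_le_pow₀ (by linarith)
    have h1 : (0:ℚ) < (q:ℚ) - 1 := by linarith
    unfold bn
    rw [div_mul_div_comm, div_mul_div_comm, div_le_div_iff_of_pos_right (by positivity)]
    rw [pow_succ, pow_succ, pow_add]
    nlinarith [mul_nonneg h1.le (mul_nonneg (by linarith : (0:ℚ) ≤ (q:ℚ)^m) (by linarith : (0:ℚ) ≤ (q:ℚ)^m - 1))]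
  have e3 : (n2 * M) * (bn q (2*k-2) * bn q k) = n1^2 * (bn q (k-1) * bn q (2*k-1)) := by
    linear_combination (M * bn q k) * e2 - (n1 * bn q (k-1)) * e1
  have e4 : (n2 * M) * (bn q (2*k-2) * bn q k) ≤ n1^2 * (bn q (2*k-2) * bn q k) := by
    rw [e3]
    refine mul_le_mul_of_nonneg_left ?_ (sq_nonneg _)
    linarith
  exact le_of_mul_le_mul_right e4 (by positivity)

open Classical in
lemma var_bound {k : ℕ} (hk : 3 ≤ k) (hq : 4 ≤ Fintype.card F) (hV : finrank F V = 2 * k)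
    (Y : Finset (Submodule F V)) (hdim : ∀ R ∈ Y, finrank F R = k)
    (hint : ∀ R ∈ Y, ∀ S ∈ Y, R ⊓ S ≠ ⊥) (P : Submodule F V) (hP : finrank F P = 1)
    (hmax : ∀ H : Submodule F V, finrank F H = 2 * k - 1 →
      (Y.filter fun S => S ≤ H).card ≤ (Y.filter fun S => P ≤ S).card)
    (hpos : 0 < (Y.filter fun S => P ≤ S).card) :
    ((Y.filter fun S => ¬ P ≤ S).card : ℚ) *
      (1 - bn (Fintype.card F) k * bn (Fintype.card F) (k-1) / bn (Fintype.card F) (2*k-1)) ^ 2 ≤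
      bn (Fintype.card F) k * gaussBinom (Fintype.card F) (2*k-2) (k-2) := by
  set q := Fintype.card F with hqdef
  have hq2 : 2 ≤ q := by omega
  set A := Y.filter fun S => P ≤ S with hA
  set Z := Y.filter fun S => ¬ P ≤ S with hZ
  let h : Submodule F V → ℚ := fun H => ((Z.filter fun S => S ≤ H).card : ℚ)
  have hsum : ∑ H ∈ iv P ⊤ (2*k-1), h H = Z.card * bn q (k-1) := by
    have dc := sum_card_bipartiteAbove_eq_sum_card_bipartiteBelow
      (s := Z) (t := iv P ⊤ (2*k-1)) (fun S H => S ≤ H)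
    have dc2 := congrArg (fun n : ℕ => (n : ℚ)) dc
    simp only [Nat.cast_sum] at dc2
    refine Eq.trans dc2.symm ?_
    rw [← nsmul_eq_mul, ← sum_const]
    refine sum_congr rfl fun S hS => ?_
    obtain ⟨hSY, hPS⟩ := mem_filter.mp hS
    have hr := finrank_sup_point hP hPS
    rw [hdim S hSY] at hr
    have := card_hyp hV hr (by omega)
    rw [show 2 * k - (k+1) = k - 1 by omega] at this
    rw [← this]
    congr 2
    ext H
    simp only [bipartiteAbove, mem_filter, mem_iv, sup_le_iff]
    tauto
  have e1 := gb_rec3 hq2 (2*k-1) (k-1)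
  rw [show 2*k-1-1 = 2*k-2 by omega, show 2*k-1-(k-1) = k by omega] at e1
  have e2 := gb_rec2 hq2 (2*k-2) (k-2)
  rw [show k - 2 + 1 = k - 1 by omega, show 2*k-2-(k-2) = k by omega] at e2
  have p1 := bn_pos hq2 (show 1 ≤ 2*k-1 by omega)
  have p2 := bn_pos hq2 (show 1 ≤ k-1 by omega)
  have p3 := bn_pos hq2 (show 1 ≤ k by omega)
  have hMpos := gb_pos hq2 (2*k-1) (k-1) (by omega)
  have hc := c_lt hq hk
  have hq4 : (4:ℚ) ≤ q := by exact_mod_cast hq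
  have hmu : gaussBinom q (2*k-2) (k-1) * (Z.card * bn q (k-1)) / gaussBinom q (2*k-1) (k-1)
      = Z.card * (bn q k * bn q (k-1) / bn q (2*k-1)) := by
    rw [div_eq_iff hMpos.ne']
    field_simp
    linear_combination (Z.card : ℚ) * e1
  set c := bn q k * bn q (k-1) / bn q (2*k-1) with hcdef
  have hc0 : 0 ≤ c := by positivity
  have hc1 : c ≤ 1 := by nlinarith
  have main := cheb (iv P ⊤ k) A (iv P ⊤ (2*k-1)) (fun R H => R ≤ H) h A.card Z.card
    (gaussBinom q (2*k-2) (k-1)) (gaussBinom q (2*k-3) (k-1)) (gaussBinom q (2*k-1) (k-1))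
    (by
      intro R hR
      obtain ⟨h1, h2⟩ := mem_filter.mp hR
      exact mem_iv.mpr ⟨h2, le_top, hdim R h1⟩)
    (fun H _ => by positivity)
    (by
      intro H hH
      have := hmax H (mem_iv.mp hH).2.2
      have h2 : (Z.filter fun S => S ≤ H).card ≤ (Y.filter fun S => S ≤ H).card :=
        card_le_card (filter_subset_filter _ (filter_subset _ _))
      simp only [h]
      exact_mod_cast h2.trans this)
    (by rw [card_iv' le_top hP (by rw [finrank_top, hV]) (by omega)])
    hMpos (gb_nonneg_s16 hq2 _ _) (gb_nonneg_s16 hq2 _ _)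
    (by
      intro H hH
      obtain ⟨h1, h2, h3⟩ := mem_iv.mp hH
      have := card_iv' (k := k) h1 hP h3 (by omega)
      rw [show 2*k-1-1 = 2*k-2 by omega] at this
      rw [← this]
      congr 2
      ext R
      simp only [mem_filter, mem_iv, le_top, true_and]
      tauto)
    (by
      intro H hH H' hH' hne
      obtain ⟨h1, h2, h3⟩ := mem_iv.mp hH
      obtain ⟨h1', h2', h3'⟩ := mem_iv.mp hH'
      have hi := finrank_inf_hyp (by omega) hV h3 h3' hne
      have := card_iv' (k := k) (le_inf h1 h1') hP hi (by omega)
      rw [show 2*k-2-1 = 2*k-3 by omega] at this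
      rw [← this]
      congr 2
      ext R
      simp only [mem_filter, mem_iv, le_top, true_and, le_inf_iff]
      tauto)
    (nn_le hq hk)
    (by
      intro R hR
      obtain ⟨hRY, hPR⟩ := mem_filter.mp hR
      have dc := sum_card_bipartiteAbove_eq_sum_card_bipartiteBelow
        (s := Z) (t := (iv P ⊤ (2*k-1)).filter fun H => R ≤ H) (fun S H => S ≤ H)
      have : Z.card ≤ ∑ H ∈ (iv P ⊤ (2*k-1)).filter (fun H => R ≤ H), (Z.filter fun S => S ≤ H).card := by
        refine le_trans ?_ dc.le
        rw [card_eq_sum_ones]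
        refine sum_le_sum fun S hS => ?_
        obtain ⟨hSY, hPS⟩ := mem_filter.mp hS
        obtain ⟨H, hH⟩ := exists_hyp hV (sup_ne_top hV (hdim R hRY) (hdim S hSY) (hint R hRY S hSY))
        obtain ⟨h1, h2, h3⟩ := mem_iv.mp hH
        rw [sup_le_iff] at h1
        refine card_pos.mpr ⟨H, ?_⟩
        simp only [bipartiteAbove, mem_filter, mem_iv]
        exact ⟨⟨⟨hPR.trans h1.1, h2, h3⟩, h1.1⟩, h1.2⟩
      simp only [h]
      exact_mod_cast this)
    (by
      rw [hsum, hmu]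
      nlinarith [(Nat.cast_nonneg Z.card : (0:ℚ) ≤ Z.card)])
  rw [hsum, hmu] at main
  have hposq : (0:ℚ) < A.card := by exact_mod_cast hpos
  rcases Nat.eq_zero_or_pos Z.card with hz | hz
  · rw [hz]
    have := gb_nonneg_s16 hq2 (2*k-2) (k-2)
    simp only [Nat.cast_zero, zero_mul]
    positivity
  have hzq : (0:ℚ) < Z.card := by exact_mod_cast hz
  have : ((A.card : ℚ) * Z.card) * (Z.card * (1 - c)^2) ≤
      (A.card * Z.card) * (bn q k * gaussBinom q (2*k-2) (k-2)) := by
    have e3 : bn q k * gaussBinom q (2*k-2) (k-2) = gaussBinom q (2*k-2) (k-1) * bn q (k-1) := by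
      rw [e2]; ring
    rw [e3]
    calc _ = (A.card : ℚ) * (Z.card - Z.card * c)^2 := by ring
      _ ≤ _ := main
      _ = _ := by ring
  exact le_of_mul_le_mul_left this (by positivity)

lemma exists_point {W : Submodule F V} (h : W ≠ ⊥) : ∃ Q : Submodule F V, finrank F Q = 1 ∧ Q ≤ W := by
  obtain ⟨v, hv, hv0⟩ := Submodule.exists_mem_ne_zero_of_ne_bot h
  exact ⟨F ∙ v, finrank_span_singleton hv0, by simpa using hv⟩

lemma point_eq {Q W : Submodule F V} (hQ : finrank F Q = 1) (hW : finrank F W = 1) (h : Q ≤ W) : Q = W :=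
  Submodule.eq_of_le_of_finrank_eq h (by rw [hQ, hW])

lemma bn_mono {q m n : ℕ} (hq : 2 ≤ q) (h : m ≤ n) : bn q m ≤ bn q n := by
  have h2 : (2:ℚ) ≤ q := by exact_mod_cast hq
  unfold bn
  have : (q:ℚ)^m ≤ (q:ℚ)^n := pow_le_pow_right₀ (by linarith) h
  exact div_le_div_of_nonneg_right (by linarith) (by linarith)

lemma card_points_s16 {U : Submodule F V} {u : ℕ} (hU : finrank F U = u) :
    ((iv ⊥ U 1).card : ℚ) = bn (Fintype.card F) u := by
  rw [card_iv' bot_le (finrank_bot F V) hU (by omega), Nat.sub_zero, Nat.sub_zero, gb_one]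

open Classical in
lemma card_biUnion_le' {α β : Type} (s : Finset α) (t : α → Finset β) (x : ℚ)
    (h : ∀ i ∈ s, ((t i).card : ℚ) ≤ x) : ((s.biUnion t).card : ℚ) ≤ s.card * x := by
  have h1 : ((s.biUnion t).card : ℚ) ≤ ∑ i ∈ s, ((t i).card : ℚ) := by
    exact_mod_cast card_biUnion_le
  refine h1.trans ?_
  rw [← nsmul_eq_mul, ← sum_const]
  exact sum_le_sum h

open Classical in
lemma deg_bound_s16 {k : ℕ} (hk : 3 ≤ k) (hV : finrank F V = 2 * k)
    (A : Finset (Submodule F V)) (P : Submodule F V) (hP : finrank F P = 1)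
    (hA : ∀ R ∈ A, finrank F R = k ∧ P ≤ R) (U W : Submodule F V) (hPU : ¬ P ≤ U) (w : ℕ)
    (hW : finrank F W ≤ w) (hWU : W ≤ U)
    (hint : ∀ R ∈ A, R ⊓ W ≠ ⊥) :
    (A.card : ℚ) ≤ bn (Fintype.card F) w * gaussBinom (Fintype.card F) (2*k-2) (k-2) := by
  have hsub : A ⊆ (iv ⊥ W 1).biUnion fun Q => iv (P ⊔ Q) ⊤ k := by
    intro R hR
    obtain ⟨Q, hQ, hQW⟩ := exists_point (hint R hR)
    rw [le_inf_iff] at hQW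
    rw [mem_biUnion]
    exact ⟨Q, mem_iv.mpr ⟨bot_le, hQW.2, hQ⟩,
      mem_iv.mpr ⟨sup_le (hA R hR).2 hQW.1, le_top, (hA R hR).1⟩⟩
  have h1 : (A.card : ℚ) ≤ (((iv ⊥ W 1).biUnion fun Q => iv (P ⊔ Q) ⊤ k).card : ℚ) := by
    exact_mod_cast card_le_card hsub
  refine h1.trans ((card_biUnion_le' _ _ (gaussBinom (Fintype.card F) (2*k-2) (k-2)) ?_).trans ?_)
  · intro Q hQ
    obtain ⟨_, hQW, hQ1⟩ := mem_iv.mp hQ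
    have hPQ : ¬ P ≤ Q := fun h => hPU (h.trans (hQW.trans hWU))
    have hr := finrank_sup_point hP hPQ
    rw [hQ1] at hr
    rw [card_iv' le_top hr (by rw [finrank_top, hV]) (by omega)]
  · rw [card_points_s16 rfl]
    exact mul_le_mul_of_nonneg_right (bn_mono two_le_card hW) (gb_nonneg_s16 two_le_card _ _)

open Classical in
lemma deg_bound2 {k : ℕ} (hk : 3 ≤ k) (hV : finrank F V = 2 * k)
    (A : Finset (Submodule F V)) (P : Submodule F V) (hP : finrank F P = 1)
    (hA : ∀ R ∈ A, finrank F R = k ∧ P ≤ R) (U1 U2 : Submodule F V)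
    (hPU1 : ¬ P ≤ U1) (hPU2 : ¬ P ≤ U2)
    (hd1 : finrank F U1 = k) (hd2 : finrank F U2 = k) (h12 : ¬ U1 ≤ P ⊔ U2)
    (hint1 : ∀ R ∈ A, R ⊓ U1 ≠ ⊥) (hint2 : ∀ R ∈ A, R ⊓ U2 ≠ ⊥) :
    (A.card : ℚ) ≤ bn (Fintype.card F) (k-1) * gaussBinom (Fintype.card F) (2*k-2) (k-2) +
      bn (Fintype.card F) k * (bn (Fintype.card F) k * gaussBinom (Fintype.card F) (2*k-3) (k-3)) := by
  set W := U1 ⊓ (P ⊔ U2) with hW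
  have hWk : finrank F W ≤ k - 1 := by
    have : W < U1 := lt_of_le_of_ne inf_le_left fun h => h12 (inf_eq_left.mp h)
    have := Submodule.finrank_lt_finrank_of_lt this
    omega
  set A1 := A.filter fun R => R ⊓ W ≠ ⊥ with hA1
  set A2 := A.filter fun R => ¬ (R ⊓ W ≠ ⊥) with hA2
  have hsplit : (A.card : ℚ) = A1.card + A2.card := by
    exact_mod_cast (card_filter_add_card_filter_not _).symm
  have b1 : (A1.card : ℚ) ≤ bn (Fintype.card F) (k-1) * gaussBinom (Fintype.card F) (2*k-2) (k-2) :=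
    deg_bound_s16 hk hV A1 P hP (fun R hR => hA R (mem_filter.mp hR).1) U1 W hPU1 (k-1) hWk inf_le_left
      (fun R hR => (mem_filter.mp hR).2)
  have b2 : (A2.card : ℚ) ≤ bn (Fintype.card F) k *
      (bn (Fintype.card F) k * gaussBinom (Fintype.card F) (2*k-3) (k-3)) := by
    have hsub : A2 ⊆ ((iv ⊥ U1 1).filter fun Q => ¬ Q ≤ P ⊔ U2).biUnion fun Q1 =>
        (iv ⊥ U2 1).biUnion fun Q2 => iv (P ⊔ Q2 ⊔ Q1) ⊤ k := by
      intro R hR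
      obtain ⟨hRA, hRW⟩ := mem_filter.mp hR
      rw [not_not] at hRW
      obtain ⟨Q1, hQ1, hQ1U⟩ := exists_point (hint1 R hRA)
      obtain ⟨Q2, hQ2, hQ2U⟩ := exists_point (hint2 R hRA)
      rw [le_inf_iff] at hQ1U hQ2U
      rw [mem_biUnion]
      refine ⟨Q1, mem_filter.mpr ⟨mem_iv.mpr ⟨bot_le, hQ1U.2, hQ1⟩, ?_⟩, ?_⟩
      · intro h
        have : Q1 ≤ R ⊓ W := le_inf hQ1U.1 (le_inf hQ1U.2 h)
        rw [hRW, le_bot_iff] at this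
        rw [this, finrank_bot] at hQ1
        omega
      · rw [mem_biUnion]
        exact ⟨Q2, mem_iv.mpr ⟨bot_le, hQ2U.2, hQ2⟩,
          mem_iv.mpr ⟨sup_le (sup_le (hA R hRA).2 hQ2U.1) hQ1U.1, le_top, (hA R hRA).1⟩⟩
    have h1 : (A2.card : ℚ) ≤ ((((iv ⊥ U1 1).filter fun Q => ¬ Q ≤ P ⊔ U2).biUnion fun Q1 =>
        (iv ⊥ U2 1).biUnion fun Q2 => iv (P ⊔ Q2 ⊔ Q1) ⊤ k).card : ℚ) := by
      exact_mod_cast card_le_card hsub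
    refine h1.trans ((card_biUnion_le' _ _
      (bn (Fintype.card F) k * gaussBinom (Fintype.card F) (2*k-3) (k-3)) ?_).trans ?_)
    · intro Q1 hQ1m
      obtain ⟨hQ1m, hQ1n⟩ := mem_filter.mp hQ1m
      obtain ⟨_, hQ1U, hQ1⟩ := mem_iv.mp hQ1m
      refine (card_biUnion_le' _ _ (gaussBinom (Fintype.card F) (2*k-3) (k-3)) ?_).trans ?_
      · intro Q2 hQ2m
        obtain ⟨_, hQ2U, hQ2⟩ := mem_iv.mp hQ2m
        have hPQ : ¬ P ≤ Q2 := fun h => hPU2 (h.trans hQ2U)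
        have hr := finrank_sup_point hP hPQ
        have hn : ¬ Q1 ≤ P ⊔ Q2 := fun h => hQ1n (h.trans (sup_le_sup_left hQ2U P))
        have hr2 := finrank_sup_point hQ1 hn
        rw [sup_comm, hr, hQ2] at hr2
        rw [card_iv' le_top hr2 (by rw [finrank_top, hV]) (by omega)]
      · rw [card_points_s16 hd2]
    · refine mul_le_mul_of_nonneg_right ?_ (mul_nonneg (bn_pos two_le_card (by omega)).le
        (gb_nonneg_s16 two_le_card _ _))
      rw [← card_points_s16 hd1]
      exact_mod_cast card_filter_le _ _
  linarith

lemma arith1 {q k : ℕ} (hq : 4 ≤ q) (hk : 3 ≤ k) : 4 * bn q (k-1) ≤ bn q k := by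
  obtain ⟨m, rfl⟩ : ∃ m, k = m + 1 := ⟨k - 1, by omega⟩
  have h4 : (4:ℚ) ≤ q := by exact_mod_cast hq
  have hx : (1:ℚ) ≤ (q:ℚ)^m := one_le_pow₀ (by linarith)
  unfold bn
  rw [Nat.add_sub_cancel, mul_div_assoc', div_le_div_iff_of_pos_right (by linarith), pow_succ]
  nlinarith

lemma arith2 {q k : ℕ} (hq : 4 ≤ q) (hk : 3 ≤ k) :
    3 * (bn q k * (bn q k * gaussBinom q (2*k-3) (k-3))) ≤ bn q k * gaussBinom q (2*k-2) (k-2) := by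
  have hq2 : 2 ≤ q := by omega
  have e := gb_rec hq2 (2*k-2) (k-3)
  rw [show k-3+1 = k-2 by omega, show 2*k-2-1 = 2*k-3 by omega] at e
  have p1 := bn_pos hq2 (show 1 ≤ k-2 by omega)
  have p2 := bn_pos hq2 (show 1 ≤ k by omega)
  have g := gb_nonneg_s16 hq2 (2*k-3) (k-3)
  have key : 3 * (bn q k * bn q (k-2)) ≤ bn q (2*k-2) := by
    obtain ⟨m, rfl⟩ : ∃ m, k = m + 2 := ⟨k - 2, by omega⟩
    have h4 : (4:ℚ) ≤ q := by exact_mod_cast hq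
    have h1 : (0:ℚ) < (q:ℚ) - 1 := by linarith
    have hx : (1:ℚ) ≤ (q:ℚ)^m := one_le_pow₀ (by linarith)
    have hy : (1:ℚ) ≤ (q:ℚ)^(m+2) := one_le_pow₀ (by linarith)
    rw [show 2*(m+2)-2 = (m+2)+m by omega, Nat.add_sub_cancel]
    have hb : bn q (m+2) * bn q m * ((q:ℚ) - 1) ≤ bn q (m+2+m) := by
      unfold bn
      rw [div_mul_div_comm, div_mul_eq_mul_div, mul_div_mul_right _ _ h1.ne',
        div_le_div_iff_of_pos_right h1, pow_add (q:ℚ) (m+2) m]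
      nlinarith
    have : 0 ≤ bn q (m+2) * bn q m := by
      rw [Nat.add_sub_cancel] at p1
      positivity
    nlinarith
  refine mul_le_mul_of_nonneg_left ?_ p2.le |>.trans' (le_of_eq (by ring : _ = bn q k * (3 * (bn q k * gaussBinom q (2*k-3) (k-3)))))
  refine le_of_mul_le_mul_right ?_ p1
  rw [e]
  calc _ = (3 * (bn q k * bn q (k-2))) * gaussBinom q (2*k-3) (k-3) := by ring
    _ ≤ _ := mul_le_mul_of_nonneg_right key g

lemma arith3 {q k : ℕ} (hq : 4 ≤ q) (hk : 3 ≤ k) :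
    bn q (k+1) < 2 * (bn q k * gaussBinom q (2*k-2) (k-2)) := by
  have hq2 : 2 ≤ q := by omega
  have h4 : (4:ℚ) ≤ q := by exact_mod_cast hq
  have h1 : (0:ℚ) < (q:ℚ) - 1 := by linarith
  have e := arith2 hq hk
  have p2 := bn_pos hq2 (show 1 ≤ k by omega)
  have g : (1:ℚ) ≤ gaussBinom q (2*k-3) (k-3) := by
    unfold gaussBinom
    refine one_le_prod fun i hi => ?_
    have := mem_range.mp hi
    rw [one_le_div]
    · have : (q:ℚ)^(i+1) ≤ (q:ℚ)^(2*k-3-i) := pow_le_pow_right₀ (by linarith) (by omega)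
      linarith
    · linarith [one_lt_pow₀ (by linarith : (1:ℚ) < q) (n := i+1) (by omega)]
  have e1 : bn q (k+1) = q * bn q k + 1 := by
    unfold bn; rw [pow_succ]; field_simp; ring
  have e2 : (q:ℚ) + 1 ≤ bn q k := by
    have : bn q 2 ≤ bn q k := bn_mono hq2 (by omega)
    have e3 : bn q 2 = q + 1 := by unfold bn; field_simp; ring
    linarith
  have e4 : bn q k * (bn q k * 1) ≤ bn q k * (bn q k * gaussBinom q (2*k-3) (k-3)) := by gcongr
  nlinarith

open Classical in
lemma main_point {k : ℕ} (hk : 3 ≤ k) (hq : 4 ≤ Fintype.card F) (hV : finrank F V = 2 * k)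
    (Y : Finset (Submodule F V)) (hdim : ∀ R ∈ Y, finrank F R = k)
    (hint : ∀ R ∈ Y, ∀ S ∈ Y, R ⊓ S ≠ ⊥) (P : Submodule F V) (hP : finrank F P = 1)
    (hU : ∃ U ∈ Y, ¬ P ≤ U)
    (hmax : ∀ H : Submodule F V, finrank F H = 2 * k - 1 →
      (Y.filter fun S => S ≤ H).card ≤ (Y.filter fun S => P ≤ S).card)
    (hpos : 0 < (Y.filter fun S => P ≤ S).card) :
    (Y.card : ℚ) < 3 * (bn (Fintype.card F) k * gaussBinom (Fintype.card F) (2*k-2) (k-2)) := by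
  have hvar := var_bound hk hq hV Y hdim hint P hP hmax hpos
  have hc := c_lt hq hk
  set q := Fintype.card F with hqdef
  have hq2 : 2 ≤ q := by omega
  have hq4 : (4:ℚ) ≤ q := by exact_mod_cast hq
  have p1 := bn_pos hq2 (show 1 ≤ 2*k-1 by omega)
  have p2 := bn_pos hq2 (show 1 ≤ k-1 by omega)
  have p3 := bn_pos hq2 (show 1 ≤ k by omega)
  have p4 := gb_pos hq2 (2*k-2) (k-2) (by omega)
  have a1 := arith1 hq hk
  have a2 := arith2 hq hk
  have a3 := arith3 hq hk
  have hsplit : (Y.card : ℚ) = (Y.filter fun S => P ≤ S).card + (Y.filter fun S => ¬ P ≤ S).card := by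
    exact_mod_cast (card_filter_add_card_filter_not _).symm
  have hAp : ∀ R ∈ Y.filter (fun S => P ≤ S), finrank F R = k ∧ P ≤ R := fun R hR =>
    ⟨hdim R (mem_filter.mp hR).1, (mem_filter.mp hR).2⟩
  obtain ⟨U, hUY, hPU⟩ := hU
  have hdU := hdim U hUY
  have hintA : ∀ S ∈ Y, ∀ R ∈ Y.filter (fun S => P ≤ S), R ⊓ S ≠ ⊥ := fun S hS R hR =>
    hint R (mem_filter.mp hR).1 S hS
  have hd1 := deg_bound_s16 hk hV _ P hP hAp U U hPU k hdU.le le_rfl (hintA U hUY)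
  by_contra hcon
  push Not at hcon
  have hz : ∃ U1 ∈ Y, ¬ P ≤ U1 ∧ ¬ U1 ≤ P ⊔ U := by
    by_contra hno
    push Not at hno
    have hsub : (Y.filter fun S => ¬ P ≤ S) ⊆ iv ⊥ (P ⊔ U) k := by
      intro S hS
      obtain ⟨h1, h2⟩ := mem_filter.mp hS
      exact mem_iv.mpr ⟨bot_le, hno S h1 h2, hdim S h1⟩
    have hr := finrank_sup_point hP hPU
    rw [hdU] at hr
    have hc2 := card_iv' (k := k) bot_le (finrank_bot F V) hr (by omega)
    rw [Nat.sub_zero, Nat.sub_zero, gb_pred two_le_card] at hc2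
    have h3 : ((Y.filter fun S => ¬ P ≤ S).card : ℚ) ≤ ((iv ⊥ (P ⊔ U) k).card : ℚ) := by
      exact_mod_cast card_le_card hsub
    rw [hc2] at h3
    linarith
  obtain ⟨U1, hU1Y, hPU1, hU1⟩ := hz
  have hd2 := deg_bound2 hk hV _ P hP hAp U1 U hPU1 hPU (hdim U1 hU1Y) hdU hU1
    (hintA U1 hU1Y) (hintA U hUY)
  set c := bn q k * bn q (k-1) / bn q (2*k-1) with hcdef
  have hc0 : 0 ≤ c := by positivity
  have hc1 : c ≤ 1/3 := by nlinarith
  have hc2 : (4/9:ℚ) ≤ (1 - c)^2 := by nlinarith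
  set z : ℚ := ((Y.filter fun S => ¬ P ≤ S).card : ℚ)
  set a : ℚ := ((Y.filter fun S => P ≤ S).card : ℚ)
  have hz0 : 0 ≤ z := Nat.cast_nonneg _
  have hz1 : z * (4/9) ≤ bn q k * gaussBinom q (2*k-2) (k-2) :=
    (mul_le_mul_of_nonneg_left hc2 hz0).trans hvar
  have ha1 : 4 * (bn q (k-1) * gaussBinom q (2*k-2) (k-2)) ≤ bn q k * gaussBinom q (2*k-2) (k-2) := by
    nlinarith
  have hD : 0 < bn q k * gaussBinom q (2*k-2) (k-2) := by positivity
  linarith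

open Classical in
lemma main_all {k : ℕ} (hk : 3 ≤ k) (hq : 4 ≤ Fintype.card F) (hV : finrank F V = 2 * k)
    (Y : Finset (Submodule F V)) (hdim : ∀ R ∈ Y, finrank F R = k)
    (hint : ∀ R ∈ Y, ∀ S ∈ Y, R ⊓ S ≠ ⊥)
    (hdict : ∀ P : Submodule F V, finrank F P = 1 → ∃ U ∈ Y, ¬ P ≤ U)
    (hdual : ∀ H : Submodule F V, finrank F H = 2 * k - 1 → ∃ U ∈ Y, ¬ U ≤ H) :
    (Y.card : ℚ) < 3 * (bn (Fintype.card F) k * gaussBinom (Fintype.card F) (2*k-2) (k-2)) := by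
  have hVn : (⊤ : Submodule F V) ≠ ⊥ := by
    intro h
    have := finrank_top F V
    rw [h, finrank_bot] at this
    omega
  obtain ⟨P0, hP0, -⟩ := exists_point hVn
  obtain ⟨U, hU, -⟩ := hdict P0 hP0
  have hUn : U ≠ ⊥ := by
    rintro rfl
    have := hdim _ hU
    rw [finrank_bot] at this
    omega
  obtain ⟨Q, hQ, hQU⟩ := exists_point hUn
  obtain ⟨P, hPm, hPmax⟩ := exists_max_image (iv (⊥ : Submodule F V) ⊤ 1)
    (fun P => (Y.filter fun S => P ≤ S).card) ⟨Q, mem_iv.mpr ⟨bot_le, le_top, hQ⟩⟩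
  have hUt : U ≠ ⊤ := by
    rintro rfl
    have := hdim _ hU
    rw [finrank_top] at this
    omega
  obtain ⟨H, hHm, hHmax⟩ := exists_max_image (iv (⊥ : Submodule F V) ⊤ (2*k-1))
    (fun H => (Y.filter fun S => S ≤ H).card) (by
      obtain ⟨H, hH⟩ := exists_hyp hV hUt
      exact ⟨H, mem_iv.mpr ⟨bot_le, le_top, (mem_iv.mp hH).2.2⟩⟩)
  have hP1 := (mem_iv.mp hPm).2.2
  have hH1 := (mem_iv.mp hHm).2.2
  have hPpos : 0 < (Y.filter fun S => P ≤ S).card :=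
    lt_of_lt_of_le (card_pos.mpr ⟨U, mem_filter.mpr ⟨hU, hQU⟩⟩)
      (hPmax Q (mem_iv.mpr ⟨bot_le, le_top, hQ⟩))
  rcases le_total (Y.filter fun S => S ≤ H).card (Y.filter fun S => P ≤ S).card with hc | hc
  · exact main_point hk hq hV Y hdim hint P hP1 (hdict P hP1)
      (fun H' hH' => (hHmax H' (mem_iv.mpr ⟨bot_le, le_top, hH'⟩)).trans hc) hPpos
  · -- dual
    let e := Subspace.orderIsoFiniteDimensional (K := F) (V := V)
    let φ : Submodule F V → Submodule F (Dual F V) := fun W => W.dualAnnihilator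
    have hφle : ∀ W W' : Submodule F V, φ W ≤ φ W' ↔ W' ≤ W := fun W W' =>
      Subspace.dualAnnihilator_le_dualAnnihilator_iff
    have hφinj : Function.Injective φ := fun W W' h =>
      le_antisymm ((hφle W' W).mp h.ge) ((hφle W W').mp h.le)
    have hφrank : ∀ W : Submodule F V, finrank F W + finrank F (φ W) = 2 * k := fun W => by
      rw [← hV]; exact Subspace.finrank_add_finrank_dualAnnihilator_eq W
    have hφsurj : ∀ X : Submodule F (Dual F V), ∃ W, φ W = X := fun X =>
      ⟨X.dualCoannihilator, Subspace.dualCoannihilator_dualAnnihilator_eq⟩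
    have hcard : (Y.image φ).card = Y.card := card_image_of_injective _ hφinj
    have hfil : ∀ (p : Submodule F (Dual F V) → Prop) , 
        ((Y.image φ).filter p).card = (Y.filter fun S => p (φ S)).card := by
      intro p
      rw [filter_image, card_image_of_injective _ hφinj]
    rw [← hcard]
    refine main_point hk hq (by rw [Subspace.dual_finrank_eq, hV]) (Y.image φ) ?_ ?_ (φ H) ?_ ?_ ?_ ?_
    · intro R hR
      obtain ⟨S, hS, rfl⟩ := mem_image.mp hR
      have := hφrank S
      rw [hdim S hS] at this
      omega
    · intro R hR R' hR'
      obtain ⟨S, hS, rfl⟩ := mem_image.mp hR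
      obtain ⟨S', hS', rfl⟩ := mem_image.mp hR'
      intro h
      apply sup_ne_top hV (hdim S hS) (hdim S' hS') (hint S hS S' hS')
      apply hφinj
      simp only [φ] at h ⊢
      rw [Submodule.dualAnnihilator_sup_eq, h, Submodule.dualAnnihilator_top]
    · have := hφrank H
      omega
    · obtain ⟨U', hU', hn⟩ := hdual H hH1
      exact ⟨φ U', mem_image_of_mem _ hU', fun h => hn ((hφle _ _).mp h)⟩
    · intro X hX
      obtain ⟨W, rfl⟩ := hφsurj X
      rw [hfil, hfil]
      simp only [hφle]
      have := hφrank W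
      exact (hPmax W (mem_iv.mpr ⟨bot_le, le_top, by omega⟩)).trans hc
    · rw [hfil]
      simp only [hφle]
      exact lt_of_lt_of_le hPpos hc

end WHM

/-- Theorem 1.6 (weak Hilton–Milner): for `q ≥ 4` and `k ≥ 4`, every independent set `Y` of
the `q`-Kneser graph `qK_{2k:k}` (i.e. intersecting family of `k`-spaces of `F_q^{2k}`)
that is not contained in a dictator nor in the dual of a dictator satisfies
`|Y| < 3·[k choose 1]_q·[2k-2 choose k-2]_q`. -/
theorem weak_hilton_milner_two (q k : ℕ) (hq4 : 4 ≤ q) (hq : IsPrimePow q) (hk : 4 ≤ k)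
    (F : Type) [Field F] [Fintype F] (hF : Fintype.card F = q)
    (Y : Set (Submodule F (Fin (2 * k) → F)))
    (hdim : ∀ R ∈ Y, Module.finrank F R = k)
    (hint : ∀ R ∈ Y, ∀ S ∈ Y, R ⊓ S ≠ ⊥)
    (hdict : ¬ ∃ p : Submodule F (Fin (2 * k) → F), Module.finrank F p = 1 ∧ ∀ R ∈ Y, p ≤ R)
    (hdual : ¬ ∃ H : Submodule F (Fin (2 * k) → F),
      Module.finrank F H = 2 * k - 1 ∧ ∀ R ∈ Y, R ≤ H) :
    (Nat.card Y : ℚ) <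
      3 * gaussBinom q k 1 * gaussBinom q (2 * k - 2) (k - 2) := by
  classical
  subst hF
  push Not at hdict hdual
  have hfin : Y.Finite := Set.toFinite Y
  have h := WHM.main_all (k := k) (by omega) hq4 (by simp) hfin.toFinset
    (by simpa using hdim) (by simpa using hint)
    (fun P hP => by simpa using hdict P hP) (fun H hH => by simpa using hdual H hH)
  rw [WHM.gb_one, mul_assoc, Nat.card_coe_set_eq, Set.ncard_eq_toFinset_card Y hfin]
  exact h
end
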